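/- Let K be a field, α, β, γ ∈ K with β ≠ 0, and let A = A(α,β,γ) be the corresponding down-up algebra. Then A is a PSF ring: every finitely generated projective right A-module P is stably free, i.e. there exist natural numbers n, m with P ⊕ Aⁿ ≅ Aᵐ as right A-modules. -/

import Mathlib

noncomputable section

/-- Defining relations of the down-up algebra `A(α,β,γ)`:
`D = ι 0`, `U = ι 1`, relations `DU² = αUDU + βU²D + γU` and `D²U = αDUD + βUD² + γD`. -/
inductive DownUpRel (K : Type) [Field K] (a b g : K) :
    FreeAlgebra K (Fin 2) → FreeAlgebra K (Fin 2) → Prop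
  | rel1 : DownUpRel K a b g
      (FreeAlgebra.ι K (0 : Fin 2) * FreeAlgebra.ι K (1 : Fin 2) * FreeAlgebra.ι K (1 : Fin 2))
      (a • (FreeAlgebra.ι K (1 : Fin 2) * FreeAlgebra.ι K (0 : Fin 2) * FreeAlgebra.ι K (1 : Fin 2)) +
       b • (FreeAlgebra.ι K (1 : Fin 2) * FreeAlgebra.ι K (1 : Fin 2) * FreeAlgebra.ι K (0 : Fin 2)) +
       g • FreeAlgebra.ι K (1 : Fin 2))
  | rel2 : DownUpRel K a b g
      (FreeAlgebra.ι K (0 : Fin 2) * FreeAlgebra.ι K (0 : Fin 2) * FreeAlgebra.ι K (1 : Fin 2))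
      (a • (FreeAlgebra.ι K (0 : Fin 2) * FreeAlgebra.ι K (1 : Fin 2) * FreeAlgebra.ι K (0 : Fin 2)) +
       b • (FreeAlgebra.ι K (1 : Fin 2) * FreeAlgebra.ι K (0 : Fin 2) * FreeAlgebra.ι K (0 : Fin 2)) +
       g • FreeAlgebra.ι K (0 : Fin 2))

/-- The down-up algebra `A(α,β,γ)`. -/
abbrev DownUp (K : Type) [Field K] (a b g : K) := RingQuot (DownUpRel K a b g)

/-- A right `A`-module `P` (realized as a left `Aᵐᵒᵖ`-module) is stably free if
`P ⊕ Aⁿ ≅ Aᵐ` as right `A`-modules for some naturals `n m`. -/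
def IsStablyFreeRight (A : Type) [Ring A] (P : Type) [AddCommGroup P] [Module Aᵐᵒᵖ P] : Prop :=
  ∃ n m : ℕ, Nonempty ((P × (Fin n → A)) ≃ₗ[Aᵐᵒᵖ] (Fin m → A))


namespace DU

section Hilbert
variable {S : Type*} [Ring S] (T : Subring S) (x : S)

/-- `∑_{j<k} x^j T` -/
def G : ℕ → AddSubgroup S
  | 0 => ⊥
  | k+1 =>
    { carrier := {s | ∃ t ∈ T, ∃ g ∈ G k, s = x^k * t + g}
      zero_mem' := ⟨0, T.zero_mem, 0, zero_mem _, by simp⟩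
      add_mem' := by
        rintro _ _ ⟨t, ht, g, hg, rfl⟩ ⟨t', ht', g', hg', rfl⟩
        exact ⟨t + t', T.add_mem ht ht', g + g', add_mem hg hg', by rw [mul_add]; abel⟩
      neg_mem' := by
        rintro _ ⟨t, ht, g, hg, rfl⟩
        exact ⟨-t, T.neg_mem ht, -g, neg_mem hg, by rw [mul_neg]; abel⟩ }

variable {T x}

lemma mem_G_succ {k : ℕ} {s : S} : s ∈ G T x (k+1) ↔ ∃ t ∈ T, ∃ g ∈ G T x k, s = x^k * t + g :=
  Iff.rfl

lemma G_succ {k : ℕ} {s : S} (h : s ∈ G T x k) : s ∈ G T x (k+1) :=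
  ⟨0, T.zero_mem, s, h, by simp⟩

lemma G_mono {k l : ℕ} (hkl : k ≤ l) {s : S} (h : s ∈ G T x k) : s ∈ G T x l := by
  induction l, hkl using Nat.le_induction with
  | base => exact h
  | succ l _ ih => exact G_succ ih

lemma G_pow {k : ℕ} {t : S} (ht : t ∈ T) : x^k * t ∈ G T x (k+1) :=
  ⟨t, ht, 0, zero_mem _, by simp⟩

lemma x_mul_G {k : ℕ} {s : S} (h : s ∈ G T x k) : x * s ∈ G T x (k+1) := by
  induction k generalizing s with
  | zero =>
    have : s = 0 := by simpa [G] using h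
    simp [this, zero_mem]
  | succ k ih =>
    obtain ⟨t, ht, g, hg, rfl⟩ := h
    exact ⟨t, ht, x * g, ih hg, by rw [mul_add, pow_succ', mul_assoc]⟩

lemma xpow_mul_G {k j : ℕ} {s : S} (h : s ∈ G T x k) : x^j * s ∈ G T x (j+k) := by
  induction j with
  | zero => simpa using h
  | succ j ih =>
    rw [pow_succ', mul_assoc, show j + 1 + k = j + k + 1 by ring]
    exact x_mul_G ih

lemma G_mul {k : ℕ} {s t : S} (h : s ∈ G T x k) (ht : t ∈ T) : s * t ∈ G T x k := by
  induction k generalizing s with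
  | zero =>
    have : s = 0 := by simpa [G] using h
    simp [this, zero_mem]
  | succ k ih =>
    obtain ⟨t', ht', g, hg, rfl⟩ := h
    exact ⟨t' * t, T.mul_mem ht' ht, g * t, ih hg, by rw [add_mul, mul_assoc]⟩

variable (h1 : ∀ t ∈ T, ∃ p ∈ T, ∃ q ∈ T, t * x = x * p + q)
  (h2 : ∀ t ∈ T, ∃ p ∈ T, ∃ q ∈ T, x * t = p * x + q)

include h1 in
lemma move_right (k : ℕ) : ∀ t ∈ T, ∃ t' ∈ T, t * x^k - x^k * t' ∈ G T x k := by
  induction k with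
  | zero => exact fun t ht => ⟨t, ht, by simp [zero_mem]⟩
  | succ k ih =>
    intro t ht
    obtain ⟨p, hp, q, hq, e⟩ := h1 t ht
    obtain ⟨p', hp', hg⟩ := ih p hp
    obtain ⟨q', hq', hg'⟩ := ih q hq
    refine ⟨p', hp', ?_⟩
    have : t * x^(k+1) - x^(k+1) * p' = x * (p * x^k - x^k * p') + (x^k * q' + (q * x^k - x^k * q')) := by
      rw [pow_succ', ← mul_assoc, e]; noncomm_ring
    rw [this]
    exact add_mem (x_mul_G hg) ⟨q', hq', _, hg', rfl⟩

include h1 in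
lemma T_mul_G {k : ℕ} {s t : S} (h : s ∈ G T x k) (ht : t ∈ T) : t * s ∈ G T x k := by
  induction k generalizing s with
  | zero =>
    have : s = 0 := by simpa [G] using h
    simp [this, zero_mem]
  | succ k ih =>
    obtain ⟨t', ht', g, hg, rfl⟩ := h
    obtain ⟨u, hu, hg'⟩ := move_right h1 k t ht
    refine ⟨u * t', T.mul_mem hu ht', (t * x^k - x^k * u) * t' + t * g,
      add_mem (G_mul hg' ht') (ih hg), by noncomm_ring⟩

include h1 h2 in
lemma move_left (k : ℕ) : ∀ t ∈ T, ∃ t' ∈ T, t' * x^k - x^k * t ∈ G T x k := by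
  induction k with
  | zero => exact fun t ht => ⟨t, ht, by simp [zero_mem]⟩
  | succ k ih =>
    intro t ht
    obtain ⟨u, hu, hg⟩ := ih t ht
    obtain ⟨p, hp, q, hq, e⟩ := h2 u hu
    refine ⟨p, hp, ?_⟩
    have : p * x^(k+1) - x^(k+1) * t = x * (u * x^k - x^k * t) - q * (x^k * 1) := by
      rw [mul_sub, ← mul_assoc x u, e, pow_succ']; noncomm_ring
    rw [this]
    exact sub_mem (x_mul_G hg) (T_mul_G h1 (G_pow T.one_mem) hq)

include h1 h2 in
theorem hilbert [IsNoetherianRing T]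
    (hgen : ∀ W : AddSubgroup S, 1 ∈ W → (∀ t ∈ T, ∀ w ∈ W, t * w ∈ W) → (∀ w ∈ W, x * w ∈ W) →
      W = ⊤) : IsNoetherianRing S := by
  classical
  have hex : ∀ s : S, ∃ k, s ∈ G T x k := by
    have := hgen
      { carrier := {s | ∃ k, s ∈ G T x k}
        zero_mem' := ⟨0, zero_mem _⟩
        add_mem' := by
          rintro a b ⟨k, hk⟩ ⟨l, hl⟩
          exact ⟨max k l, add_mem (G_mono (le_max_left _ _) hk) (G_mono (le_max_right _ _) hl)⟩
        neg_mem' := by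
          rintro a ⟨k, hk⟩
          exact ⟨k, neg_mem hk⟩ }
      ⟨1, by simpa using G_pow (k := 0) (x := x) T.one_mem⟩
      (fun t ht w ⟨k, hk⟩ => ⟨k, T_mul_G h1 hk ht⟩)
      (fun w ⟨k, hk⟩ => ⟨k+1, x_mul_G hk⟩)
    intro s
    have hs : s ∈ (⊤ : AddSubgroup S) := trivial
    rw [← this] at hs
    exact hs
  rw [isNoetherianRing_iff, isNoetherian_def]
  intro I
  let L : ℕ → Submodule T T := fun k =>
    { carrier := {t | ∃ g ∈ G T x k, x^k * (t : S) + g ∈ I}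
      zero_mem' := ⟨0, zero_mem _, by simp⟩
      add_mem' := by
        rintro a b ⟨g, hg, ha⟩ ⟨g', hg', hb⟩
        refine ⟨g + g', add_mem hg hg', ?_⟩
        convert I.add_mem ha hb using 1
        push_cast; rw [mul_add]; abel
      smul_mem' := by
        rintro ⟨c, hc⟩ ⟨t, ht⟩ ⟨g, hg, ha⟩
        obtain ⟨c', hc', hg'⟩ := move_left h1 h2 k c hc
        refine ⟨(c' * x^k - x^k * c) * t + c' * g, add_mem (G_mul hg' ht) (T_mul_G h1 hg hc'), ?_⟩
        convert I.smul_mem c' ha using 1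
        simp only [smul_eq_mul, Subring.coe_mul]
        noncomm_ring }
  have hLmono : Monotone L := by
    apply monotone_nat_of_le_succ
    rintro k t ⟨g, hg, ha⟩
    refine ⟨x * g, x_mul_G hg, ?_⟩
    convert I.smul_mem x ha using 1
    rw [smul_eq_mul, mul_add, pow_succ', mul_assoc]
  obtain ⟨N, hN⟩ := monotone_stabilizes_iff_noetherian.mpr (inferInstance : IsNoetherian T T) ⟨L, hLmono⟩
  have hZ : ∀ k, ∃ Z : Finset S, (Z : Set S) ⊆ I ∧ ∀ t ∈ L k, ∃ z ∈ Submodule.span S (Z : Set S),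
      z - x^k * (t : S) ∈ G T x k := by
    intro k
    obtain ⟨W, hW⟩ := IsNoetherian.noetherian (R := T) (L k)
    have : ∀ w : T, ∃ z : S, w ∈ W → z ∈ I ∧ z - x^k * (w : S) ∈ G T x k := by
      intro w
      by_cases hw : w ∈ W
      · have : w ∈ L k := by rw [← hW]; exact Submodule.subset_span hw
        obtain ⟨g, hg, ha⟩ := this
        exact ⟨_, fun _ => ⟨ha, by simpa using hg⟩⟩
      · exact ⟨0, fun h => (hw h).elim⟩
    choose z hz using this
    refine ⟨W.image z, ?_, ?_⟩
    · intro s hs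
      simp only [Finset.coe_image, Set.mem_image] at hs
      obtain ⟨w, hw, rfl⟩ := hs
      exact (hz w hw).1
    · intro t ht
      rw [← hW] at ht
      induction ht using Submodule.span_induction with
      | mem w hw =>
        exact ⟨z w, Submodule.subset_span (Finset.mem_coe.mpr (Finset.mem_image_of_mem z hw)), (hz w hw).2⟩
      | zero => exact ⟨0, zero_mem _, by simp [zero_mem]⟩
      | add a b _ _ iha ihb =>
        obtain ⟨p, hp, hp'⟩ := iha
        obtain ⟨q, hq, hq'⟩ := ihb
        refine ⟨p + q, add_mem hp hq, ?_⟩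
        convert add_mem hp' hq' using 1
        push_cast; rw [mul_add]; abel
      | smul c a _ ih =>
        obtain ⟨p, hp, hp'⟩ := ih
        obtain ⟨c', hc', hg'⟩ := move_left h1 h2 k c c.2
        refine ⟨c' * p, Submodule.smul_mem _ c' hp, ?_⟩
        have : c' * p - x^k * ((c • a : T) : S) =
          c' * (p - x^k * a) + (c' * x^k - x^k * c) * a := by
          simp only [smul_eq_mul, Subring.coe_mul]; noncomm_ring
        rw [this]
        exact add_mem (T_mul_G h1 hp' hc') (G_mul hg' a.2)
  choose Z hZI hZ using hZ
  refine ⟨(Finset.range (N+1)).biUnion Z, le_antisymm ?_ ?_⟩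
  · rw [Submodule.span_le]
    intro s hs
    simp only [Finset.coe_biUnion, Set.mem_iUnion] at hs
    obtain ⟨k, _, hs⟩ := hs
    exact hZI k hs
  · have sub : ∀ k ≤ N, Submodule.span S (Z k : Set S) ≤
        Submodule.span S (((Finset.range (N+1)).biUnion Z : Finset S) : Set S) := by
      intro k hk
      apply Submodule.span_mono
      intro s hs
      simp only [Finset.coe_biUnion, Set.mem_iUnion]
      exact ⟨k, by simp; omega, hs⟩
    have subI : ∀ k, Submodule.span S (Z k : Set S) ≤ I := fun k => Submodule.span_le.mpr (hZI k)
    have key : ∀ k, ∀ s ∈ I, s ∈ G T x k →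
        s ∈ Submodule.span S (((Finset.range (N+1)).biUnion Z : Finset S) : Set S) := by
      intro k
      induction k with
      | zero =>
        intro s _ hs
        have : s = 0 := by simpa [G] using hs
        simp [this, zero_mem]
      | succ k ih =>
        rintro s hsI ⟨t, ht, g, hg, rfl⟩
        have htL : (⟨t, ht⟩ : T) ∈ L k := ⟨g, hg, hsI⟩
        have : ∃ z ∈ Submodule.span S (((Finset.range (N+1)).biUnion Z : Finset S) : Set S),
            z ∈ I ∧ z - x^k * t ∈ G T x k := by
          rcases le_or_gt k N with hk | hk
          · obtain ⟨z, hz, hz'⟩ := hZ k _ htL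
            exact ⟨z, sub k hk hz, subI k hz, hz'⟩
          · have hL : L N = L k := hN k hk.le
            rw [← hL] at htL
            obtain ⟨z, hz, hz'⟩ := hZ N _ htL
            refine ⟨x^(k-N) * z, Submodule.smul_mem _ _ (sub N le_rfl hz),
              I.smul_mem _ (subI N hz), ?_⟩
            have e := xpow_mul_G (j := k - N) hz'
            rwa [mul_sub, ← mul_assoc, ← pow_add, Nat.sub_add_cancel hk.le] at e
        obtain ⟨z, hz, hzI, hzg⟩ := this
        have e := ih (x^k * t + g - z) (I.sub_mem hsI hzI) (by
          have : x^k * t + g - z = g - (z - x^k * t) := by abel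
          rw [this]; exact sub_mem hg hzg)
        simpa using add_mem e hz
    intro s hs
    obtain ⟨k, hk⟩ := hex s
    exact key k s hs hk

end Hilbert

/-- Hilbert-type theorem for subalgebras -/
theorem hilbert_alg {K S : Type*} [Field K] [Ring S] [Algebra K S] (T : Subalgebra K S) (x : S)
    (hT : IsNoetherianRing T)
    (h1 : ∀ t ∈ T, ∃ p ∈ T, ∃ q ∈ T, t * x = x * p + q)
    (h2 : ∀ t ∈ T, ∃ p ∈ T, ∃ q ∈ T, x * t = p * x + q)
    (B : Subalgebra K S) (hB : B = Algebra.adjoin K (T ∪ {x} : Set S)) : IsNoetherianRing B := by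
  have hTB : T ≤ B := by
    rw [hB]; exact fun s hs => Algebra.subset_adjoin (Or.inl hs)
  have hxB : x ∈ B := by
    rw [hB]; exact Algebra.subset_adjoin (Or.inr rfl)
  let T' : Subalgebra K B := T.comap B.val
  have e : T ≃+* T' :=
    { toFun := fun t => ⟨⟨t, hTB t.2⟩, t.2⟩
      invFun := fun t => ⟨t.1.1, t.2⟩
      map_mul' := fun _ _ => rfl
      map_add' := fun _ _ => rfl
      left_inv := fun _ => rfl
      right_inv := fun _ => rfl }
  have : IsNoetherianRing T'.toSubring := isNoetherianRing_of_ringEquiv T e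
  refine hilbert (T := T'.toSubring) (x := ⟨x, hxB⟩) ?_ ?_ ?_
  · rintro ⟨t, htB⟩ ht
    obtain ⟨p, hp, q, hq, e⟩ := h1 t ht
    exact ⟨⟨p, hTB hp⟩, hp, ⟨q, hTB hq⟩, hq, Subtype.ext e⟩
  · rintro ⟨t, htB⟩ ht
    obtain ⟨p, hp, q, hq, e⟩ := h2 t ht
    exact ⟨⟨p, hTB hp⟩, hp, ⟨q, hTB hq⟩, hq, Subtype.ext e⟩
  intro W hW1 hWT hWx
  let Q : Subalgebra K B :=
    { carrier := {s | ∀ w ∈ W, s * w ∈ W}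
      mul_mem' := fun {a b} ha hb w hw => by rw [mul_assoc]; exact ha _ (hb _ hw)
      add_mem' := fun {a b} ha hb w hw => by rw [add_mul]; exact add_mem (ha _ hw) (hb _ hw)
      algebraMap_mem' := fun r w hw => hWT _ (T'.algebraMap_mem r) w hw }
  have hQ : Algebra.adjoin K (T ∪ {x} : Set S) ≤ Q.map B.val := by
    apply Algebra.adjoin_le
    rintro s (hs | hs)
    · exact ⟨⟨s, hTB hs⟩, fun w hw => hWT _ hs w hw, rfl⟩
    · rw [Set.mem_singleton_iff] at hs
      subst hs
      exact ⟨⟨s, hxB⟩, hWx, rfl⟩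
  rw [← hB] at hQ
  rw [eq_top_iff]
  intro s _
  obtain ⟨s', hs', e⟩ := hQ s.2
  have : s' = s := Subtype.ext e
  subst this
  simpa using hs' 1 hW1

/-- A ring with central `t` and elements `U, D` satisfying homogenized down-up relations
is noetherian. -/
theorem noeth {K S : Type*} [Field K] [Ring S] [Algebra K S] (a b g : K) (hb : b ≠ 0) (t U D : S)
    (htU : t * U = U * t) (htD : t * D = D * t)
    (r1 : D * U * U = a • (U * D * U) + b • (U * U * D) + g • (t * t * U))
    (r2 : D * D * U = a • (D * U * D) + b • (U * D * D) + g • (t * t * D))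
    (hgen : Algebra.adjoin K {t, U, D} = ⊤) : IsNoetherianRing S := by
  have hcomm : (U * D) * (D * U) = (D * U) * (U * D) := by
    have e1 : (U * D) * (D * U) = U * (D * D * U) := by noncomm_ring
    have e2 : (D * U) * (U * D) = (D * U * U) * D := by noncomm_ring
    rw [e1, e2, r1, r2]
    simp only [mul_add, add_mul, mul_smul_comm, smul_mul_assoc]
    congr 1
    · simp only [mul_assoc]
    · congr 1
      rw [← mul_assoc, ← mul_assoc, ← htU, mul_assoc t U t, ← htU]; simp only [mul_assoc]
  have tx : t * (U * D) = (U * D) * t := by rw [← mul_assoc, htU, mul_assoc, htD, mul_assoc]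
  have ty : t * (D * U) = (D * U) * t := by rw [← mul_assoc, htD, mul_assoc, htU, mul_assoc]
  set G0 : Set S := {t, U * D, D * U} with hG0
  have hc : ∀ p ∈ G0, ∀ q ∈ G0, p * q = q * p := by
    rintro p (rfl | rfl | rfl) q (rfl | rfl | rfl) <;> first | rfl | assumption | (symm; assumption)
  set C := Algebra.adjoin K G0 with hC
  have htC : t ∈ C := Algebra.subset_adjoin (by simp [hG0])
  have hxC : U * D ∈ C := Algebra.subset_adjoin (by simp [hG0])
  have hyC : D * U ∈ C := Algebra.subset_adjoin (by simp [hG0])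
  have hCn : IsNoetherianRing C := by
    have hmc : IsMulCommutative C := Algebra.isMulCommutative_adjoin K hc
    let _ : CommRing C := { (inferInstance : Ring C) with mul_comm := hmc.is_comm.comm }
    let φ : MvPolynomial (Fin 3) K →ₐ[K] C :=
      MvPolynomial.aeval (![⟨t, htC⟩, ⟨U * D, hxC⟩, ⟨D * U, hyC⟩] : Fin 3 → C)
    have hφ : Function.Surjective φ := by
      have : C ≤ φ.range.map C.val := by
        apply Algebra.adjoin_le
        rintro p (rfl | rfl | rfl)
        · exact ⟨_, ⟨MvPolynomial.X 0, rfl⟩, by simp [φ]⟩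
        · exact ⟨_, ⟨MvPolynomial.X 1, rfl⟩, by simp [φ]⟩
        · exact ⟨_, ⟨MvPolynomial.X 2, rfl⟩, by simp [φ]⟩
      intro s
      obtain ⟨s', ⟨p, hp⟩, e⟩ := this s.2
      exact ⟨p, by rw [← Subtype.ext (a1 := s') (a2 := s) e]; exact hp⟩
    exact isNoetherianRing_of_surjective _ _ φ.toRingHom hφ
  have xb : U * U * D = b⁻¹ • ((D * U - a • (U * D) - g • (t * t)) * U) := by
    rw [eq_inv_smul_iff₀ hb]
    simp only [sub_mul, smul_mul_assoc, r1]
    abel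
  have xb' : U * D * D = b⁻¹ • (D * (D * U - a • (U * D) - g • (t * t))) := by
    rw [eq_inv_smul_iff₀ hb]
    have : D * (t * t) = t * t * D := by rw [← mul_assoc, ← htD, mul_assoc, ← htD, mul_assoc]
    simp only [mul_sub, mul_smul_comm, this, ← mul_assoc]
    rw [r2]
    abel
  set T := Algebra.adjoin K ((C : Set S) ∪ {U}) with hTdef
  have hCT : C ≤ T := fun s hs => Algebra.subset_adjoin (Or.inl hs)
  have hUT : U ∈ T := Algebra.subset_adjoin (Or.inr rfl)
  have hTn : IsNoetherianRing T := by
    refine hilbert_alg C U hCn ?_ ?_ T hTdef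
    · have : C ≤
        { carrier := {s | ∃ p ∈ C, s * U = U * p}
          mul_mem' := by
            rintro s s' ⟨p, hp, e⟩ ⟨p', hp', e'⟩
            exact ⟨p * p', C.mul_mem hp hp', by rw [mul_assoc, e', ← mul_assoc, e, mul_assoc]⟩
          add_mem' := by
            rintro s s' ⟨p, hp, e⟩ ⟨p', hp', e'⟩
            exact ⟨p + p', C.add_mem hp hp', by rw [add_mul, e, e', mul_add]⟩
          algebraMap_mem' := fun r => ⟨_, C.algebraMap_mem r, Algebra.commutes r U⟩ :
          Subalgebra K S } := by
        rw [hC]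
        apply Algebra.adjoin_le
        rintro s (rfl | rfl | rfl)
        · exact ⟨_, htC, htU⟩
        · exact ⟨_, hyC, by simp only [mul_assoc]⟩
        · refine ⟨a • (D * U) + b • (U * D) + g • (t * t), C.add_mem (C.add_mem (C.smul_mem hyC _)
            (C.smul_mem hxC _)) (C.smul_mem (C.mul_mem htC htC) _), ?_⟩
          have : U * (t * t) = t * t * U := by rw [← mul_assoc, ← htU, mul_assoc, ← htU, mul_assoc]
          simp only [mul_add, mul_smul_comm, this, ← mul_assoc]
          rw [r1]
      intro s hs
      obtain ⟨p, hp, e⟩ := this hs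
      exact ⟨p, hp, 0, C.zero_mem, by rw [e, add_zero]⟩
    · have : C ≤
        { carrier := {s | ∃ p ∈ C, U * s = p * U}
          mul_mem' := by
            rintro s s' ⟨p, hp, e⟩ ⟨p', hp', e'⟩
            exact ⟨p * p', C.mul_mem hp hp', by rw [← mul_assoc, e, mul_assoc, e', mul_assoc]⟩
          add_mem' := by
            rintro s s' ⟨p, hp, e⟩ ⟨p', hp', e'⟩
            exact ⟨p + p', C.add_mem hp hp', by rw [add_mul, mul_add, e, e']⟩
          algebraMap_mem' := fun r => ⟨_, C.algebraMap_mem r, (Algebra.commutes r U).symm⟩ :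
          Subalgebra K S } := by
        rw [hC]
        apply Algebra.adjoin_le
        rintro s (rfl | rfl | rfl)
        · exact ⟨_, htC, htU.symm⟩
        · refine ⟨b⁻¹ • (D * U - a • (U * D) - g • (t * t)), C.smul_mem (C.sub_mem (C.sub_mem hyC
            (C.smul_mem hxC _)) (C.smul_mem (C.mul_mem htC htC) _)) _, ?_⟩
          rw [← mul_assoc, xb, smul_mul_assoc]
        · exact ⟨_, hxC, by simp only [mul_assoc]⟩
      intro s hs
      obtain ⟨p, hp, e⟩ := this hs
      exact ⟨p, hp, 0, C.zero_mem, by rw [e, add_zero]⟩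
  have hTop : (⊤ : Subalgebra K S) = Algebra.adjoin K ((T : Set S) ∪ {D}) := by
    symm
    rw [eq_top_iff, ← hgen]
    apply Algebra.adjoin_le
    rintro s (rfl | rfl | rfl)
    · exact Algebra.subset_adjoin (Or.inl (hCT htC))
    · exact Algebra.subset_adjoin (Or.inl hUT)
    · exact Algebra.subset_adjoin (Or.inr rfl)
  have : IsNoetherianRing (⊤ : Subalgebra K S) := by
    refine hilbert_alg T D hTn ?_ ?_ ⊤ hTop
    · let Q : Subalgebra K S :=
        { carrier := {s | s ∈ T ∧ ∃ p ∈ T, ∃ q ∈ T, s * D = D * p + q}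
          mul_mem' := by
            rintro s s' ⟨hs, p, hp, q, hq, e⟩ ⟨hs', p', hp', q', hq', e'⟩
            refine ⟨T.mul_mem hs hs', p * p', T.mul_mem hp hp', q * p' + s * q',
              T.add_mem (T.mul_mem hq hp') (T.mul_mem hs hq'), ?_⟩
            rw [mul_assoc, e', mul_add, ← mul_assoc, e]; noncomm_ring
          add_mem' := by
            rintro s s' ⟨hs, p, hp, q, hq, e⟩ ⟨hs', p', hp', q', hq', e'⟩
            exact ⟨T.add_mem hs hs', p + p', T.add_mem hp hp', q + q', T.add_mem hq hq',
              by rw [add_mul, e, e', mul_add]; abel⟩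
          algebraMap_mem' := fun r => ⟨T.algebraMap_mem r, _, T.algebraMap_mem r, 0, T.zero_mem,
            by rw [add_zero]; exact Algebra.commutes r D⟩ }
      have hCQ : C ≤ Q := by
        rw [hC]
        apply Algebra.adjoin_le
        rintro s (rfl | rfl | rfl)
        · exact ⟨hCT htC, _, hCT htC, 0, T.zero_mem, by rw [add_zero, htD]⟩
        · refine ⟨hCT hxC, b⁻¹ • (D * U - a • (U * D) - g • (t * t)), hCT <| C.smul_mem (C.sub_mem
            (C.sub_mem hyC (C.smul_mem hxC _)) (C.smul_mem (C.mul_mem htC htC) _)) _,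
            0, T.zero_mem, ?_⟩
          rw [xb', mul_smul_comm, add_zero]
        · exact ⟨hCT hyC, _, hCT hxC, 0, T.zero_mem, by rw [add_zero]; simp only [mul_assoc]⟩
      have : T ≤ Q := by
        apply Algebra.adjoin_le
        rintro s (hs | rfl)
        · exact hCQ hs
        · exact ⟨hUT, 0, T.zero_mem, _, hCT hxC, by simp⟩
      exact fun s hs => (this hs).2
    · let Q : Subalgebra K S :=
        { carrier := {s | s ∈ T ∧ ∃ p ∈ T, ∃ q ∈ T, D * s = p * D + q}
          mul_mem' := by
            rintro s s' ⟨hs, p, hp, q, hq, e⟩ ⟨hs', p', hp', q', hq', e'⟩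
            refine ⟨T.mul_mem hs hs', p * p', T.mul_mem hp hp', p * q' + q * s',
              T.add_mem (T.mul_mem hp hq') (T.mul_mem hq hs'), ?_⟩
            rw [← mul_assoc, e, add_mul, mul_assoc p D s', e']; noncomm_ring
          add_mem' := by
            rintro s s' ⟨hs, p, hp, q, hq, e⟩ ⟨hs', p', hp', q', hq', e'⟩
            exact ⟨T.add_mem hs hs', p + p', T.add_mem hp hp', q + q', T.add_mem hq hq',
              by rw [mul_add, e, e', add_mul]; abel⟩
          algebraMap_mem' := fun r => ⟨T.algebraMap_mem r, _, T.algebraMap_mem r, 0, T.zero_mem,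
            by rw [add_zero]; exact (Algebra.commutes r D).symm⟩ }
      have hCQ : C ≤ Q := by
        rw [hC]
        apply Algebra.adjoin_le
        rintro s (rfl | rfl | rfl)
        · exact ⟨hCT htC, _, hCT htC, 0, T.zero_mem, by rw [add_zero, htD]⟩
        · exact ⟨hCT hxC, _, hCT hyC, 0, T.zero_mem, by rw [add_zero]; simp only [mul_assoc]⟩
        · refine ⟨hCT hyC, a • (D * U) + b • (U * D) + g • (t * t), hCT <| C.add_mem (C.add_mem
            (C.smul_mem hyC _) (C.smul_mem hxC _)) (C.smul_mem (C.mul_mem htC htC) _),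
            0, T.zero_mem, ?_⟩
          rw [← mul_assoc, r2, add_zero]
          simp only [add_mul, smul_mul_assoc]
      have : T ≤ Q := by
        apply Algebra.adjoin_le
        rintro s (hs | rfl)
        · exact hCQ hs
        · exact ⟨hUT, 0, T.zero_mem, _, hCT hyC, by simp⟩
      exact fun s hs => (this hs).2
  exact isNoetherianRing_of_ringEquiv _ (Subalgebra.topEquiv (R := K) (A := S)).toRingEquiv

end DU

namespace DU

/-- Filtered ring with an abstract filtered-exact Koszul complex of length three. -/
structure KF (A : Type*) [Ring A] (F : ℤ → AddSubgroup A) (U D s1 s2 s3 s4 w1 w2 : A) : Prop where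
  mono : Monotone F
  neg : ∀ k < 0, F k = ⊥
  zero : ∀ x ∈ F 0, x ≠ 0 → ∃ y ∈ F 0, y * x = 1
  one : (1 : A) ∈ F 0
  mul : ∀ {i j x y}, x ∈ F i → y ∈ F j → x * y ∈ F (i + j)
  ex : ∀ x, ∃ k, x ∈ F k
  hU : U ∈ F 1
  hD : D ∈ F 1
  hw1 : w1 ∈ F 1
  hw2 : w2 ∈ F 1
  hs1 : s1 ∈ F 2
  hs2 : s2 ∈ F 2
  hs3 : s3 ∈ F 2
  hs4 : s4 ∈ F 2
  r1 : s1 * w1 + s2 * w2 = 0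
  r2 : s3 * w1 + s4 * w2 = 0
  r3 : U * s1 + D * s3 = 0
  r4 : U * s2 + D * s4 = 0
  gen : ∀ k, 1 ≤ k → ∀ x ∈ F k, ∃ a ∈ F (k-1), ∃ b ∈ F (k-1), ∃ c ∈ F (k-1), x = U * a + D * b + c
  E1 : ∀ k, ∀ a ∈ F k, ∀ b ∈ F k, U * a + D * b ∈ F k → ∃ c ∈ F (k-2), ∃ e ∈ F (k-2),
    a - (s1 * c + s2 * e) ∈ F (k-1) ∧ b - (s3 * c + s4 * e) ∈ F (k-1)
  E2 : ∀ k, ∀ c ∈ F k, ∀ e ∈ F k, s1 * c + s2 * e ∈ F (k+1) → s3 * c + s4 * e ∈ F (k+1) →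
    ∃ f ∈ F (k-1), c - w1 * f ∈ F (k-1) ∧ e - w2 * f ∈ F (k-1)
  E3 : ∀ k, ∀ f ∈ F k, w1 * f ∈ F k → w2 * f ∈ F k → f ∈ F (k-1)

variable {A : Type*} [Ring A] {F : ℤ → AddSubgroup A} {U D s1 s2 s3 s4 w1 w2 : A}

lemma fcast {i j : ℤ} {x : A} (hx : x ∈ F i) (hij : i = j) : x ∈ F j := hij ▸ hx

/-- shifted filtration on a free module -/
def Fd (F : ℤ → AddSubgroup A) {n : ℕ} (d : Fin n → ℕ) (k : ℤ) : AddSubgroup (Fin n → A) where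
  carrier := {x | ∀ i, x i ∈ F (k - d i)}
  zero_mem' := fun _ => (F _).zero_mem
  add_mem' := fun hx hy i => (F _).add_mem (hx i) (hy i)
  neg_mem' := fun hx i => (F _).neg_mem (hx i)

lemma mem_Fd {n : ℕ} {d : Fin n → ℕ} {k : ℤ} {x : Fin n → A} :
    x ∈ Fd F d k ↔ ∀ i, x i ∈ F (k - d i) := Iff.rfl

/-- strict finite generation -/
def Strict (F : ℤ → AddSubgroup A) {n : ℕ} (d : Fin n → ℕ) (N : Submodule A (Fin n → A))
    {m : ℕ} (e : Fin m → ℕ) (v : Fin m → (Fin n → A)) : Prop :=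
  (∀ j, v j ∈ N ∧ v j ∈ Fd F d (e j)) ∧
  ∀ k : ℤ, ∀ x ∈ N, x ∈ Fd F d k → ∃ a ∈ Fd F e k, x = Fintype.linearCombination A v a

/-- every submodule of a free module is strictly finitely generated -/
def SN (F : ℤ → AddSubgroup A) : Prop :=
  ∀ (n : ℕ) (d : Fin n → ℕ) (N : Submodule A (Fin n → A)),
    ∃ (m : ℕ) (e : Fin m → ℕ) (v : Fin m → (Fin n → A)), Strict F d N e v

section
variable (h : KF A F U D s1 s2 s3 s4 w1 w2) {n : ℕ} {d : Fin n → ℕ}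
include h

lemma Fd_mono {k l : ℤ} (hkl : k ≤ l) {x : Fin n → A} (hx : x ∈ Fd F d k) : x ∈ Fd F d l :=
  fun i => h.mono (by omega) (hx i)

lemma Fd_smul {j k l : ℤ} {s : A} (hs : s ∈ F j) {x : Fin n → A} (hx : x ∈ Fd F d k)
    (hl : l = j + k := by ring) : s • x ∈ Fd F d l := by
  intro i
  have := h.mul hs (hx i)
  rw [show l - (d i : ℤ) = j + (k - d i) by omega]
  exact this

lemma Fd_ex (x : Fin n → A) : ∃ k : ℕ, x ∈ Fd F d k := by
  choose k hk using fun i => h.ex (x i)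
  refine ⟨∑ i, ((k i).toNat + d i), fun i => h.mono ?_ (hk i)⟩
  have : (k i).toNat + d i ≤ ∑ i, ((k i).toNat + d i) :=
    Finset.single_le_sum (f := fun i => (k i).toNat + d i) (fun _ _ => Nat.zero_le _) (Finset.mem_univ i)
  omega

lemma Fd_neg {k : ℤ} (hk : k < 0) {x : Fin n → A} (hx : x ∈ Fd F d k) : x = 0 := by
  ext i
  have := hx i
  rw [h.neg _ (by omega)] at this
  simpa using this

lemma FE1 (k : ℤ) (a b : Fin n → A) (ha : a ∈ Fd F d k) (hb : b ∈ Fd F d k)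
    (hab : U • a + D • b ∈ Fd F d k) : ∃ c ∈ Fd F d (k-2), ∃ e ∈ Fd F d (k-2),
    a - (s1 • c + s2 • e) ∈ Fd F d (k-1) ∧ b - (s3 • c + s4 • e) ∈ Fd F d (k-1) := by
  have := fun i => h.E1 _ (a i) (ha i) (b i) (hb i) (hab i)
  choose c hc e he h1 h2 using this
  refine ⟨c, ?_, e, ?_, ?_, ?_⟩ <;> intro i
  · convert hc i using 2; ring
  · convert he i using 2; ring
  · exact fcast (h1 i) (by ring)
  · exact fcast (h2 i) (by ring)

lemma FE2 (k : ℤ) (c e : Fin n → A) (hc : c ∈ Fd F d k) (he : e ∈ Fd F d k)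
    (h1 : s1 • c + s2 • e ∈ Fd F d (k+1)) (h2 : s3 • c + s4 • e ∈ Fd F d (k+1)) :
    ∃ f ∈ Fd F d (k-1), c - w1 • f ∈ Fd F d (k-1) ∧ e - w2 • f ∈ Fd F d (k-1) := by
  have := fun i => h.E2 _ (c i) (hc i) (e i) (he i)
    (by exact fcast (h1 i) (by ring)) (by exact fcast (h2 i) (by ring))
  choose f hf h1 h2 using this
  refine ⟨f, ?_, ?_, ?_⟩ <;> intro i
  · convert hf i using 2; ring
  · exact fcast (h1 i) (by ring)
  · exact fcast (h2 i) (by ring)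

lemma FE3 (k : ℤ) (f : Fin n → A) (hf : f ∈ Fd F d k)
    (h1 : w1 • f ∈ Fd F d k) (h2 : w2 • f ∈ Fd F d k) : f ∈ Fd F d (k-1) := by
  intro i
  convert h.E3 _ (f i) (hf i) (h1 i) (h2 i) using 2; ring

lemma lc_mem {N : Submodule A (Fin n → A)} {m : ℕ} {e : Fin m → ℕ} {v : Fin m → (Fin n → A)}
    (hv : Strict F d N e v) (a : Fin m → A) : Fintype.linearCombination A v a ∈ N := by
  rw [Fintype.linearCombination_apply]
  exact N.sum_mem fun j _ => N.smul_mem _ (hv.1 j).1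

lemma lc_Fd {N : Submodule A (Fin n → A)} {m : ℕ} {e : Fin m → ℕ} {v : Fin m → (Fin n → A)}
    (hv : Strict F d N e v) {k : ℤ} {a : Fin m → A} (ha : a ∈ Fd F e k) :
    Fintype.linearCombination A v a ∈ Fd F d k := by
  rw [Fintype.linearCombination_apply]
  refine (Fd F d k).sum_mem fun j _ => Fd_smul h (ha j) (hv.1 j).2 (by ring)

/-- exactness in the middle for a submodule -/
def NE2 (F : ℤ → AddSubgroup A) (s1 s2 s3 s4 w1 w2 : A) {n : ℕ} (d : Fin n → ℕ)
    (N : Submodule A (Fin n → A)) : Prop :=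
  ∀ (k : ℤ), ∀ c ∈ N, ∀ e ∈ N, c ∈ Fd F d k → e ∈ Fd F d k →
    s1 • c + s2 • e ∈ Fd F d (k+1) → s3 • c + s4 • e ∈ Fd F d (k+1) →
    ∃ f ∈ N, f ∈ Fd F d (k-1) ∧ c - w1 • f ∈ Fd F d (k-1) ∧ e - w2 • f ∈ Fd F d (k-1)

/-- exactness at the first place for a submodule -/
def NE1 (F : ℤ → AddSubgroup A) (U D s1 s2 s3 s4 : A) {n : ℕ} (d : Fin n → ℕ)
    (N : Submodule A (Fin n → A)) : Prop :=
  ∀ (k : ℤ), ∀ a ∈ N, ∀ b ∈ N, a ∈ Fd F d k → b ∈ Fd F d k → U • a + D • b ∈ Fd F d k →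
    ∃ c ∈ N, c ∈ Fd F d (k-2) ∧ ∃ e ∈ N, e ∈ Fd F d (k-2) ∧
    a - (s1 • c + s2 • e) ∈ Fd F d (k-1) ∧ b - (s3 • c + s4 • e) ∈ Fd F d (k-1)

lemma ne2_ker {N : Submodule A (Fin n → A)} {m : ℕ} {e : Fin m → ℕ} {v : Fin m → (Fin n → A)}
    (hv : Strict F d N e v) :
    NE2 F s1 s2 s3 s4 w1 w2 e (LinearMap.ker (Fintype.linearCombination A v)) := by
  intro k x hx y hy hxk hyk h1 h2
  obtain ⟨f, hf, g1, g2⟩ := FE2 h k x y hxk hyk h1 h2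
  set π := Fintype.linearCombination A v with hπ
  have q1 : π (x - w1 • f) ∈ Fd F d (k-1) := lc_Fd h hv g1
  have q2 : π (y - w2 • f) ∈ Fd F d (k-1) := lc_Fd h hv g2
  rw [LinearMap.mem_ker] at hx hy
  rw [map_sub, map_smul, hx, zero_sub, neg_mem_iff] at q1
  rw [map_sub, map_smul, hy, zero_sub, neg_mem_iff] at q2
  have q3 := FE3 h (k-1) (π f) (lc_Fd h hv hf) q1 q2
  obtain ⟨f', hf', e'⟩ := hv.2 _ _ (lc_mem h hv f) q3
  refine ⟨f - f', ?_, ?_, ?_, ?_⟩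
  · rw [LinearMap.mem_ker, map_sub, sub_eq_zero]; exact e'
  · exact sub_mem hf (Fd_mono h (by omega) hf')
  · rw [smul_sub, sub_sub_eq_add_sub, add_sub_right_comm]
    exact add_mem g1 (Fd_smul h h.hw1 hf')
  · rw [smul_sub, sub_sub_eq_add_sub, add_sub_right_comm]
    exact add_mem g2 (Fd_smul h h.hw2 hf')

lemma ne1_ker {N : Submodule A (Fin n → A)} {m : ℕ} {e : Fin m → ℕ} {v : Fin m → (Fin n → A)}
    (hv : Strict F d N e v) (hN : NE2 F s1 s2 s3 s4 w1 w2 d N) :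
    NE1 F U D s1 s2 s3 s4 e (LinearMap.ker (Fintype.linearCombination A v)) := by
  intro k a ha b hb hak hbk hab
  obtain ⟨x, hx, y, hy, g1, g2⟩ := FE1 h k a b hak hbk hab
  set π := Fintype.linearCombination A v with hπ
  have q1 := lc_Fd h hv g1
  have q2 := lc_Fd h hv g2
  rw [LinearMap.mem_ker] at ha hb
  rw [← hπ, map_sub, map_add, map_smul, map_smul, ha, zero_sub, neg_mem_iff] at q1
  rw [← hπ, map_sub, map_add, map_smul, map_smul, hb, zero_sub, neg_mem_iff] at q2
  obtain ⟨f, hf, hfk, g3, g4⟩ := hN (k-2) _ (lc_mem h hv x) _ (lc_mem h hv y) (lc_Fd h hv hx)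
    (lc_Fd h hv hy) (by convert q1 using 2; ring) (by convert q2 using 2; ring)
  obtain ⟨f', hf', ef⟩ := hv.2 _ _ hf hfk
  obtain ⟨x', hx', ex⟩ := hv.2 _ _ (N.sub_mem (lc_mem h hv x) (N.smul_mem w1 hf)) g3
  obtain ⟨y', hy', ey⟩ := hv.2 _ _ (N.sub_mem (lc_mem h hv y) (N.smul_mem w2 hf)) g4
  refine ⟨x - w1 • f' - x', ?_, ?_, y - w2 • f' - y', ?_, ?_, ?_, ?_⟩
  · rw [LinearMap.mem_ker, map_sub, map_sub, map_smul, sub_eq_zero, ← ef, ex]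
  · exact sub_mem (sub_mem hx (Fd_smul h h.hw1 hf')) (Fd_mono h (by omega) hx')
  · rw [LinearMap.mem_ker, map_sub, map_sub, map_smul, sub_eq_zero, ← ef, ey]
  · exact sub_mem (sub_mem hy (Fd_smul h h.hw2 hf')) (Fd_mono h (by omega) hy')
  · have : a - (s1 • (x - w1 • f' - x') + s2 • (y - w2 • f' - y')) =
      a - (s1 • x + s2 • y) + (s1 * w1 + s2 * w2) • f' + s1 • x' + s2 • y' := by
      simp only [smul_sub, add_smul, mul_smul]; abel
    rw [this, h.r1, zero_smul, add_zero]
    exact add_mem (add_mem g1 (Fd_smul h h.hs1 hx')) (Fd_smul h h.hs2 hy')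
  · have : b - (s3 • (x - w1 • f' - x') + s4 • (y - w2 • f' - y')) =
      b - (s3 • x + s4 • y) + (s3 * w1 + s4 * w2) • f' + s3 • x' + s4 • y' := by
      simp only [smul_sub, add_smul, mul_smul]; abel
    rw [this, h.r2, zero_smul, add_zero]
    exact add_mem (add_mem g2 (Fd_smul h h.hs3 hx')) (Fd_smul h h.hs4 hy')

/-- removing a redundant generator -/
lemma strict_remove {N : Submodule A (Fin n → A)} {m : ℕ} {e : Fin (m+1) → ℕ}
    {v : Fin (m+1) → (Fin n → A)} (hv : Strict F d N e v) (x : Fin (m+1) → A) (j : Fin (m+1))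
    (hx : x ∈ Fd F e (e j)) (hx0 : Fintype.linearCombination A v x = 0) (hj : x j ≠ 0) :
    ∃ (e' : Fin m → ℕ) (v' : Fin m → (Fin n → A)), Strict F d N e' v' := by
  obtain ⟨y, hy, hyx⟩ := h.zero (x j) (by simpa using hx j) hj
  refine ⟨fun i => e (j.succAbove i), fun i => v (j.succAbove i), fun i => hv.1 _, ?_⟩
  intro k z hz hzk
  obtain ⟨a, ha, rfl⟩ := hv.2 k z hz hzk
  refine ⟨fun i => a (j.succAbove i) - a j * (y * x (j.succAbove i)), ?_, ?_⟩
  · intro i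
    refine sub_mem (ha _) ?_
    have := h.mul (ha j) (h.mul hy (hx (j.succAbove i)))
    convert this using 2
    ring
  · have e1 : Fintype.linearCombination A v a =
        Fintype.linearCombination A v (a - (a j * y) • x) := by
      rw [map_sub, map_smul, hx0, smul_zero, sub_zero]
    rw [e1, Fintype.linearCombination_apply, Fintype.linearCombination_apply,
      Fin.sum_univ_succAbove _ j]
    simp [mul_assoc, hyx]

lemma free_of_ne1 (hsn : SN F) (N : Submodule A (Fin n → A))
    (hN : NE1 F U D s1 s2 s3 s4 d N) : ∃ m : ℕ, Nonempty (N ≃ₗ[A] (Fin m → A)) := by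
  classical
  have hex : ∃ m : ℕ, ∃ (e : Fin m → ℕ) (v : Fin m → (Fin n → A)), Strict F d N e v := hsn n d N
  obtain ⟨m, ⟨e, v, hv⟩, hmin⟩ : ∃ m : ℕ, (∃ (e : Fin m → ℕ) (v : Fin m → (Fin n → A)),
      Strict F d N e v) ∧ ∀ {q : ℕ}, q < m → ¬ ∃ (e : Fin q → ℕ) (v : Fin q → (Fin n → A)),
      Strict F d N e v := ⟨Nat.find hex, Nat.find_spec hex, fun hq => Nat.find_min hex hq⟩
  set π := Fintype.linearCombination A v with hπ
  have key : ∀ k : ℕ, ∀ x : Fin m → A, π x = 0 → x ∈ Fd F e ((k : ℤ) - 1) → x = 0 := by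
    intro k
    induction k with
    | zero => exact fun x _ hx => Fd_neg h (by simp) hx
    | succ k ih =>
      intro x hx0 hxk
      have hxk' : x ∈ Fd F e (k : ℤ) := by simpa using hxk
      have hz : ∀ j, e j = k → x j = 0 := by
        intro j hj
        by_contra hne
        have hm0 : m ≠ 0 := fun h0 => (Fin.cast h0 j).elim0
        obtain ⟨q, hq⟩ := Nat.exists_eq_succ_of_ne_zero hm0
        subst hq
        obtain ⟨e', v', h'⟩ := strict_remove h hv x j (by rw [hj]; exact hxk') hx0 hne
        exact hmin (Nat.lt_succ_self q) ⟨e', v', h'⟩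
      have hdec : ∀ j, ∃ a ∈ F ((k : ℤ) - 1 - e j), ∃ b ∈ F ((k : ℤ) - 1 - e j),
          ∃ c ∈ F ((k : ℤ) - 1 - e j), x j = U * a + D * b + c := by
        intro j
        rcases lt_trichotomy (e j) k with hlt | heq | hgt
        · have := h.gen _ (by omega) (x j) (hxk' j)
          rwa [show (k : ℤ) - e j - 1 = (k : ℤ) - 1 - e j by ring] at this
        · exact ⟨0, zero_mem _, 0, zero_mem _, 0, zero_mem _, by simp [hz j heq]⟩
        · refine ⟨0, zero_mem _, 0, zero_mem _, 0, zero_mem _, ?_⟩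
          have := hxk' j
          rw [h.neg _ (by omega)] at this
          simpa using this
      choose a ha b hb c hc hx using hdec
      have hx' : x = U • a + D • b + c := funext hx
      have hab : U • π a + D • π b ∈ Fd F d ((k : ℤ) - 1) := by
        have : U • π a + D • π b = - π c := by
          rw [hx'] at hx0
          simp only [map_add, map_smul] at hx0
          exact eq_neg_of_add_eq_zero_left hx0
        rw [this]
        exact neg_mem (lc_Fd h hv hc)
      obtain ⟨c', hc', hc'k, e', he', he'k, g1, g2⟩ := hN _ _ (lc_mem h hv a) _ (lc_mem h hv b)
        (lc_Fd h hv ha) (lc_Fd h hv hb) hab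
      obtain ⟨p, hp, ep⟩ := hv.2 _ _ hc' hc'k
      obtain ⟨q, hq, eq⟩ := hv.2 _ _ he' he'k
      obtain ⟨y, hy, ey⟩ := hv.2 _ _ (N.sub_mem (lc_mem h hv a)
        (N.add_mem (N.smul_mem s1 hc') (N.smul_mem s2 he'))) g1
      obtain ⟨z, hz', ez⟩ := hv.2 _ _ (N.sub_mem (lc_mem h hv b)
        (N.add_mem (N.smul_mem s3 hc') (N.smul_mem s4 he'))) g2
      have a0 : a - (s1 • p + s2 • q) - y = 0 := by
        apply ih
        · rw [map_sub, map_sub, map_add, map_smul, map_smul, sub_eq_zero, ← ep, ← eq, ey]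
        · exact sub_mem (sub_mem ha (add_mem (Fd_smul h h.hs1 hp) (Fd_smul h h.hs2 hq)))
            (Fd_mono h (by omega) hy)
      have b0 : b - (s3 • p + s4 • q) - z = 0 := by
        apply ih
        · rw [map_sub, map_sub, map_add, map_smul, map_smul, sub_eq_zero, ← ep, ← eq, ez]
        · exact sub_mem (sub_mem hb (add_mem (Fd_smul h h.hs3 hp) (Fd_smul h h.hs4 hq)))
            (Fd_mono h (by omega) hz')
      have a1 : a = s1 • p + s2 • q + y := by rw [sub_sub, sub_eq_zero] at a0; exact a0
      have b1 : b = s3 • p + s4 • q + z := by rw [sub_sub, sub_eq_zero] at b0; exact b0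
      refine ih x hx0 ?_
      have : x = (U * s1 + D * s3) • p + (U * s2 + D * s4) • q + U • y + D • z + c := by
        rw [hx', a1, b1]
        simp only [smul_add, add_smul, mul_smul]; abel
      rw [this, h.r3, h.r4, zero_smul, zero_smul, zero_add, zero_add]
      exact add_mem (add_mem (Fd_smul h h.hU hy) (Fd_smul h h.hD hz')) hc
  refine ⟨m, ⟨LinearEquiv.symm (LinearEquiv.ofBijective
    (LinearMap.codRestrict N π fun a => lc_mem h hv a) ⟨?_, ?_⟩)⟩⟩
  · rw [← LinearMap.ker_eq_bot, LinearMap.ker_eq_bot']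
    intro x hx
    obtain ⟨k, hk⟩ := Fd_ex h (d := e) x
    refine key (k+1) x (congrArg Subtype.val hx) (by simpa using hk)
  · rintro ⟨x, hx⟩
    obtain ⟨k, hk⟩ := Fd_ex h (d := d) x
    obtain ⟨a, -, rfl⟩ := hv.2 k x hx hk
    exact ⟨a, rfl⟩

end

/-- splitting off a projective quotient -/
lemma split_ker {R M P : Type*} [Ring R] [AddCommGroup M] [Module R M] [AddCommGroup P]
    [Module R P] [Module.Projective R P] (f : M →ₗ[R] P) (hf : Function.Surjective f) :
    Nonempty (M ≃ₗ[R] LinearMap.ker f × P) := by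
  obtain ⟨g, hg⟩ := Module.projective_lifting_property f LinearMap.id hf
  exact ⟨(LinearMap.exact_subtype_ker_map f).splitSurjectiveEquiv
    (Submodule.injective_subtype _) ⟨g, hg⟩ |>.1⟩

theorem stably_free (h : KF A F U D s1 s2 s3 s4 w1 w2) (hsn : SN F) (P : Type*) [AddCommGroup P]
    [Module A P] [Module.Finite A P] [Module.Projective A P] :
    ∃ n m : ℕ, Nonempty ((P × (Fin n → A)) ≃ₗ[A] (Fin m → A)) := by
  obtain ⟨n, f, hf⟩ := Module.Finite.exists_fin' A P
  obtain ⟨m1, e1, v1, hv1⟩ := hsn n (fun _ => 0) (LinearMap.ker f)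
  obtain ⟨m2, e2, v2, hv2⟩ := hsn m1 e1 (LinearMap.ker (Fintype.linearCombination A v1))
  have hE2 := ne2_ker h hv1
  have hE1 := ne1_ker h hv2 hE2
  obtain ⟨m3, ⟨φ3⟩⟩ := free_of_ne1 h hsn _ hE1
  obtain ⟨φ0⟩ := split_ker f hf
  set N1 := LinearMap.ker f
  set N2 := LinearMap.ker (Fintype.linearCombination A v1) with hN2
  set N3 := LinearMap.ker (Fintype.linearCombination A v2) with hN3
  have sur : ∀ {n m : ℕ} {d : Fin n → ℕ} {e : Fin m → ℕ} {N : Submodule A (Fin n → A)}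
      {v : Fin m → (Fin n → A)} (hv : Strict F d N e v), Module.Projective A N →
      Nonempty ((Fin m → A) ≃ₗ[A] LinearMap.ker (Fintype.linearCombination A v) × N) := by
    intro n m d e N v hv hp
    have hs : Function.Surjective (LinearMap.codRestrict N (Fintype.linearCombination A v)
        fun a => lc_mem h hv a) := by
      rintro ⟨x, hx⟩
      obtain ⟨k, hk⟩ := Fd_ex h (d := d) x
      obtain ⟨a, -, rfl⟩ := hv.2 k x hx hk
      exact ⟨a, rfl⟩
    have := split_ker _ hs
    rwa [LinearMap.ker_codRestrict] at this
  have p1 : Module.Projective A N1 := by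
    have : Module.Projective A (N1 × P) := Module.Projective.of_equiv φ0
    exact Module.Projective.of_split (LinearMap.inl A N1 P) (LinearMap.fst A N1 P) (by ext; rfl)
  obtain ⟨φ1⟩ := sur hv1 p1
  have p2 : Module.Projective A N2 := by
    have : Module.Projective A (N2 × N1) := Module.Projective.of_equiv φ1
    exact Module.Projective.of_split (LinearMap.inl A N2 N1) (LinearMap.fst A N2 N1) (by ext; rfl)
  obtain ⟨φ2⟩ := sur hv2 p2
  have fe : ∀ a b : ℕ, Nonempty (((Fin a → A) × (Fin b → A)) ≃ₗ[A] (Fin (a+b) → A)) := fun a b =>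
    ⟨(LinearEquiv.sumArrowLequivProdArrow (Fin a) (Fin b) A A).symm ≪≫ₗ
      LinearEquiv.funCongrLeft A A finSumFinEquiv.symm⟩
  obtain ⟨ψ1⟩ := fe m1 m3
  obtain ⟨ψ2⟩ := fe n m2
  refine ⟨m1 + m3, n + m2, ⟨?_⟩⟩
  refine ?_ ≪≫ₗ (LinearEquiv.prodCongr φ0.symm φ2.symm) ≪≫ₗ ψ2
  refine (LinearEquiv.prodCongr (LinearEquiv.refl A P) (ψ1.symm ≪≫ₗ
    LinearEquiv.prodCongr φ1 φ3.symm)) ≪≫ₗ ?_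
  exact
    { toFun := fun x => ((x.2.1.2, x.1), (x.2.2, x.2.1.1))
      invFun := fun y => (y.1.2, ((y.2.2, y.1.1), y.2.1))
      map_add' := fun _ _ => rfl
      map_smul' := fun _ _ => rfl
      left_inv := fun _ => rfl
      right_inv := fun _ => rfl }

end DU

namespace DU
open Polynomial

section Rees
variable {K A : Type*} [Field K] [Ring A] [Algebra K A] {U D : A}

/-- Rees ring inside `A[X]` -/
abbrev Rees (K : Type*) {A : Type*} [Field K] [Ring A] [Algebra K A] (U D : A) :
    Subalgebra K A[X] :=
  Algebra.adjoin K {X, C U * X, C D * X}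

theorem rees_noeth (a b g : K) (hb : b ≠ 0)
    (r1 : D * U * U = a • (U * D * U) + b • (U * U * D) + g • U)
    (r2 : D * D * U = a • (D * U * D) + b • (U * D * D) + g • D) :
    IsNoetherianRing (Rees K U D) := by
  have hX : (X : A[X]) ∈ Rees K U D := Algebra.subset_adjoin (by simp)
  have hU : C U * X ∈ Rees K U D := Algebra.subset_adjoin (by simp)
  have hD : C D * X ∈ Rees K U D := Algebra.subset_adjoin (by simp)
  have m3 : ∀ p q r : A, C p * X * (C q * X) * (C r * X) = C (p * q * r) * X^3 := by
    intro p q r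
    simp only [C_mul_X_eq_monomial, monomial_mul_monomial, C_mul_X_pow_eq_monomial]
  have m1 : ∀ p : A, X * X * (C p * X) = C p * X^3 := by
    intro p
    rw [← pow_two, X_pow_mul, mul_assoc, ← pow_succ']
  have ms : ∀ (c : K) (p : A), C (c • p) * X^3 = c • (C p * X^3 : A[X]) := by
    intro c p
    rw [← smul_C, smul_mul_assoc]
  refine noeth (S := Rees K U D) a b g hb ⟨X, hX⟩ ⟨C U * X, hU⟩ ⟨C D * X, hD⟩ ?_ ?_ ?_ ?_ ?_
  · apply Subtype.ext
    exact X_mul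
  · apply Subtype.ext
    exact X_mul
  · apply Subtype.ext
    change C D * X * (C U * X) * (C U * X) = a • (C U * X * (C D * X) * (C U * X)) +
      b • (C U * X * (C U * X) * (C D * X)) + g • (X * X * (C U * X))
    rw [m3, m3, m3, m1, r1, C_add, C_add, add_mul, add_mul, ms, ms, ms]
  · apply Subtype.ext
    change C D * X * (C D * X) * (C U * X) = a • (C D * X * (C U * X) * (C D * X)) +
      b • (C U * X * (C D * X) * (C D * X)) + g • (X * X * (C D * X))
    rw [m3, m3, m3, m1, r2, C_add, C_add, add_mul, add_mul, ms, ms, ms]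
  · rw [eq_top_iff, ← Algebra.adjoin_adjoin_coe_preimage (R := K)]
    apply Algebra.adjoin_mono
    rintro ⟨s, hs⟩ h
    rcases h with (h | h | h)
    · left; exact Subtype.ext h
    · right; left; exact Subtype.ext h
    · right; right; exact Subtype.ext h

variable {F : ℤ → Submodule K A} (mono : Monotone F) (neg : ∀ k < 0, F k = ⊥)
  (one : (1 : A) ∈ F 0) (mul : ∀ {i j x y}, x ∈ F i → y ∈ F j → x * y ∈ F (i + j))
  (hU : U ∈ F 1) (hD : D ∈ F 1) (zero : ∀ x ∈ F 0, ∃ c : K, x = algebraMap K A c)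
  (gen : ∀ k, 1 ≤ k → ∀ x ∈ F k, ∃ a ∈ F (k-1), ∃ b ∈ F (k-1), ∃ c ∈ F (k-1),
    x = U * a + D * b + c)

include mono one mul hU hD in
lemma rees_coeff (p : A[X]) (hp : p ∈ Rees K U D) (k : ℕ) : p.coeff k ∈ F k := by
  let Q : Subalgebra K A[X] :=
    { carrier := {p | ∀ k : ℕ, p.coeff k ∈ F k}
      mul_mem' := by
        intro p q hp hq k
        rw [coeff_mul]
        refine (F k).sum_mem ?_
        rintro ⟨i, j⟩ hij
        rw [Finset.HasAntidiagonal.mem_antidiagonal] at hij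
        have := mul (hp i) (hq j)
        rw [← hij]; push_cast
        exact this
      add_mem' := fun hp hq k => by rw [coeff_add]; exact add_mem (hp k) (hq k)
      algebraMap_mem' := by
        intro r k
        rw [Polynomial.algebraMap_apply, coeff_C]
        split_ifs with h
        · subst h
          rw [Algebra.algebraMap_eq_smul_one]
          exact (F 0).smul_mem r one
        · exact zero_mem _ }
  have h1 : ∀ c ∈ F 1, C c * X ∈ Q := by
    intro c hc k
    rw [C_mul_X_eq_monomial, coeff_monomial]
    split_ifs with h
    · subst h; exact hc
    · exact zero_mem _
  have : Rees K U D ≤ Q := by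
    apply Algebra.adjoin_le
    rintro s (rfl | rfl | rfl)
    · simpa using h1 1 (mono (by norm_num) one)
    · exact h1 _ hU
    · exact h1 _ hD
  exact this hp k

include zero gen in
lemma rees_monomial (k : ℕ) : ∀ c ∈ F k, monomial k c ∈ Rees K U D := by
  have hX : (X : A[X]) ∈ Rees K U D := Algebra.subset_adjoin (by simp)
  have hU : C U * X ∈ Rees K U D := Algebra.subset_adjoin (by simp)
  have hD : C D * X ∈ Rees K U D := Algebra.subset_adjoin (by simp)
  induction k with
  | zero =>
    intro c hc
    obtain ⟨r, rfl⟩ := zero c hc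
    exact (Rees K U D).algebraMap_mem r
  | succ k ih =>
    intro c hc
    obtain ⟨x, hx, y, hy, z, hz, rfl⟩ := gen _ (by push_cast; omega) c hc
    have e : ((k + 1 : ℕ) : ℤ) - 1 = k := by push_cast; ring
    rw [e] at hx hy hz
    have : monomial (k+1) (U * x + D * y + z) =
      C U * X * monomial k x + C D * X * monomial k y + X * monomial k z := by
      rw [C_mul_X_eq_monomial, C_mul_X_eq_monomial, monomial_mul_monomial, monomial_mul_monomial,
        X_mul_monomial, map_add, map_add, add_comm 1 k]
    rw [this]
    exact add_mem (add_mem (mul_mem hU (ih _ hx)) (mul_mem hD (ih _ hy))) (mul_mem hX (ih _ hz))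

include mono neg one mul hU hD zero gen in
theorem sn_of_rees [IsNoetherianRing (Rees K U D)] : SN (fun k => (F k).toAddSubgroup) := by
  classical
  intro n d N
  set S := Rees K U D with hS
  let co : (Fin n → S) → ℕ → (Fin n → A) := fun p k i => ((p i : A[X]) * X^(d i)).coeff k
  have co_smul : ∀ (s : S) (p : Fin n → S) (k : ℕ), co (s • p) k =
      ∑ ij ∈ Finset.HasAntidiagonal.antidiagonal k, (s : A[X]).coeff ij.1 • co p ij.2 := by
    intro s p k
    ext i
    simp only [co, Pi.smul_apply, smul_eq_mul, Subalgebra.coe_mul, Finset.sum_apply]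
    rw [mul_assoc, coeff_mul]
  have co_add : ∀ (p q : Fin n → S) (k : ℕ), co (p + q) k = co p k + co q k := by
    intro p q k
    ext i
    simp [co, add_mul]
  let M : Submodule S (Fin n → S) :=
    { carrier := {p | ∀ k, co p k ∈ N}
      zero_mem' := by
        intro k
        have : co 0 k = 0 := by ext i; simp [co]
        rw [this]; exact zero_mem _
      add_mem' := fun hp hq k => by rw [co_add]; exact add_mem (hp k) (hq k)
      smul_mem' := fun s p hp k => by
        rw [co_smul]
        exact N.sum_mem fun ij _ => N.smul_mem _ (hp _) }
  obtain ⟨Z, hZ⟩ := IsNoetherian.noetherian (R := S) M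
  -- degree bound
  obtain ⟨B, hB⟩ : ∃ B : ℕ, ∀ z ∈ Z, ∀ k, B ≤ k → co z k = 0 := by
    refine ⟨∑ z ∈ Z, ∑ i, (((z i : A[X]) * X^(d i)).natDegree + 1), ?_⟩
    intro z hz k hk
    ext i
    apply coeff_eq_zero_of_natDegree_lt
    have e1 : (((z i : A[X]) * X^(d i)).natDegree + 1) ≤
        ∑ i, (((z i : A[X]) * X^(d i)).natDegree + 1) :=
      Finset.single_le_sum (f := fun i => (((z i : A[X]) * X^(d i)).natDegree + 1))
        (fun _ _ => Nat.zero_le _) (Finset.mem_univ i)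
    have e2 : ∑ i, (((z i : A[X]) * X^(d i)).natDegree + 1) ≤ ∑ z ∈ Z, ∑ i,
        (((z i : A[X]) * X^(d i)).natDegree + 1) :=
      Finset.single_le_sum (f := fun z : Fin n → S => ∑ i, (((z i : A[X]) * X^(d i)).natDegree + 1))
        (fun _ _ => Nat.zero_le _) hz
    omega
  have hcoF : ∀ (p : Fin n → S) (k : ℕ), co p k ∈ Fd (fun k => (F k).toAddSubgroup) d k := by
    intro p k i
    change ((p i : A[X]) * X^(d i)).coeff k ∈ F _
    rw [coeff_mul_X_pow']
    split_ifs with h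
    · have := rees_coeff mono one mul hU hD (p i) (p i).2 (k - d i)
      rwa [Nat.cast_sub h] at this
    · exact zero_mem _
  -- index type
  let ι := Z × Fin B
  let φ : ι ≃ Fin (Fintype.card ι) := Fintype.equivFin ι
  refine ⟨Fintype.card ι, fun j => (φ.symm j).2, fun j => co (φ.symm j).1 (φ.symm j).2, ?_, ?_⟩
  · intro j
    refine ⟨?_, hcoF _ _⟩
    have : ((φ.symm j).1 : Fin n → S) ∈ M := by
      rw [← hZ]; exact Submodule.subset_span (φ.symm j).1.2
    exact this _
  · intro k x hx hxk
    rcases lt_or_ge k 0 with hk | hk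
    · have : x = 0 := by
        ext i
        have : x i ∈ F (k - d i) := hxk i
        rw [neg _ (by omega)] at this
        simpa using this
      subst this
      exact ⟨0, zero_mem _, by simp⟩
    lift k to ℕ using hk
    have hxi : ∀ i, x i ∈ F ((k : ℤ) - d i) := hxk
    let p : Fin n → S := fun i => ⟨monomial (k - d i) (x i), by
      rcases le_or_gt (d i) k with h | h
      · apply rees_monomial zero gen
        rw [Nat.cast_sub h]; exact hxi i
      · have : x i = 0 := by
          have := hxi i
          rw [neg _ (by omega)] at this
          simpa using this
        rw [this, map_zero]; exact zero_mem _⟩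
    have hco : ∀ l, co p l = if l = k then x else 0 := by
      intro l
      ext i
      change (monomial (k - d i) (x i) * X^(d i)).coeff l = _
      rcases le_or_gt (d i) k with h | h
      · rw [monomial_mul_X_pow, Nat.sub_add_cancel h, coeff_monomial]
        by_cases hl : l = k
        · simp [hl]
        · rw [if_neg (Ne.symm hl), if_neg hl]; rfl
      · have : x i = 0 := by
          have := hxi i
          rw [neg _ (by omega)] at this
          simpa using this
        rw [this, map_zero, zero_mul, coeff_zero]
        split_ifs
        · exact this.symm
        · rfl
    have hpM : p ∈ M := by
      intro l
      rw [hco]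
      split_ifs
      · exact hx
      · exact zero_mem _
    rw [← hZ, Submodule.mem_span_finset'] at hpM
    obtain ⟨f, hf⟩ := hpM
    have co_sum : ∀ (s : Finset Z), co (∑ z ∈ s, f z • (z : Fin n → S)) k =
        ∑ z ∈ s, co (f z • (z : Fin n → S)) k := by
      intro s
      induction s using Finset.induction_on with
      | empty => ext i; simp [co]
      | insert a s ha ih => rw [Finset.sum_insert ha, Finset.sum_insert ha, co_add, ih]
    have hx' : x = ∑ z : Z, ∑ l : Fin B,
        (if (l : ℕ) ≤ k then (f z : A[X]).coeff (k - l) else 0) • co z l := by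
      have e0 : x = co p k := by rw [hco, if_pos rfl]
      rw [e0, ← hf, co_sum]
      refine Finset.sum_congr rfl fun z _ => ?_
      rw [co_smul, ← Finset.Nat.sum_antidiagonal_swap,
        Finset.Nat.sum_antidiagonal_eq_sum_range_succ_mk]
      rw [Fin.sum_univ_eq_sum_range
        (fun l => (if l ≤ k then (f z : A[X]).coeff (k - l) else 0) • co z l) B]
      have g1 : ∑ l ∈ Finset.range B,
          (if l ≤ k then (f z : A[X]).coeff (k - l) else 0) • co z l =
          ∑ l ∈ Finset.range (B + (k + 1)),
          (if l ≤ k then (f z : A[X]).coeff (k - l) else 0) • co z l := by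
        apply Finset.sum_subset
        · intro l; simp only [Finset.mem_range]; omega
        · intro l _ hl
          rw [hB z z.2 l (by simpa using hl), smul_zero]
      have g2 : ∑ l ∈ Finset.range (k + 1),
          (if l ≤ k then (f z : A[X]).coeff (k - l) else 0) • co z l =
          ∑ l ∈ Finset.range (B + (k + 1)),
          (if l ≤ k then (f z : A[X]).coeff (k - l) else 0) • co z l := by
        apply Finset.sum_subset
        · intro l; simp only [Finset.mem_range]; omega
        · intro l _ hl
          rw [if_neg (by simp only [Finset.mem_range] at hl; omega), zero_smul]
      rw [g1, ← g2]
      refine Finset.sum_congr rfl fun l hl => ?_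
      rw [if_pos (by simp only [Finset.mem_range] at hl; omega)]
      rfl
    refine ⟨fun j => if ((φ.symm j).2 : ℕ) ≤ k then
      (f (φ.symm j).1 : A[X]).coeff (k - (φ.symm j).2) else 0, ?_, ?_⟩
    · intro j
      change (if ((φ.symm j).2 : ℕ) ≤ k then
        (f (φ.symm j).1 : A[X]).coeff (k - (φ.symm j).2) else 0) ∈ F _
      split_ifs with h
      · have := rees_coeff mono one mul hU hD _ (f (φ.symm j).1).2 (k - (φ.symm j).2)
        rwa [Nat.cast_sub h] at this
      · exact zero_mem _
    · rw [Fintype.linearCombination_apply]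
      rw [← φ.sum_comp]
      simp only [Equiv.symm_apply_apply]
      rw [Fintype.sum_prod_type]
      exact hx'

end Rees
end DU

namespace DUM
open MvPolynomial

section Model
variable {K : Type*} [Field K]

/-- two-variable polynomials -/
abbrev PR (K : Type*) [Field K] := MvPolynomial (Fin 2) K

/-- doubled degree filtration on polynomials -/
def G (K : Type*) [Field K] (j : ℤ) : Submodule K (PR K) where
  carrier := {r | ∀ s : Fin 2 →₀ ℕ, coeff s r ≠ 0 → 2 * ((s 0 : ℤ) + s 1) ≤ j}
  zero_mem' := by intro s hs; simp at hs
  add_mem' := by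
    intro p q hp hq s hs
    rw [coeff_add] at hs
    by_cases h : coeff s p = 0
    · exact hq s (by simpa [h] using hs)
    · exact hp s h
  smul_mem' := by
    intro c p hp s hs
    rw [coeff_smul] at hs
    exact hp s (right_ne_zero_of_smul hs)

lemma mem_G {j : ℤ} {r : PR K} : r ∈ G K j ↔
    ∀ s : Fin 2 →₀ ℕ, coeff s r ≠ 0 → 2 * ((s 0 : ℤ) + s 1) ≤ j := Iff.rfl

lemma G_mono {i j : ℤ} (h : i ≤ j) {r : PR K} (hr : r ∈ G K i) : r ∈ G K j :=
  fun s hs => (hr s hs).trans h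

lemma G_neg {j : ℤ} (h : j < 0) {r : PR K} (hr : r ∈ G K j) : r = 0 := by
  ext s
  by_contra hs
  have := hr s hs
  omega

lemma G_one : (1 : PR K) ∈ G K 0 := by
  intro s hs
  rw [coeff_one] at hs
  split_ifs at hs with h
  · subst h; simp
  · exact absurd rfl hs

lemma G_X (i : Fin 2) : (X i : PR K) ∈ G K 2 := by
  intro s hs
  rw [coeff_X'] at hs
  split_ifs at hs with h
  · subst h; fin_cases i <;> simp
  · exact absurd rfl hs

lemma G_mul {i j : ℤ} {p q : PR K} (hp : p ∈ G K i) (hq : q ∈ G K j) : p * q ∈ G K (i + j) := by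
  classical
  intro s hs
  rw [coeff_mul] at hs
  obtain ⟨⟨u, v⟩, huv, h⟩ := Finset.exists_ne_zero_of_sum_ne_zero hs
  rw [Finset.HasAntidiagonal.mem_antidiagonal] at huv
  have h1 := hp u (left_ne_zero_of_mul h)
  have h2 := hq v (right_ne_zero_of_mul h)
  subst huv
  simp only [Finsupp.add_apply]
  push_cast
  omega

lemma G_cast {i j : ℤ} {p : PR K} (hp : p ∈ G K i) (h : i = j) : p ∈ G K j := h ▸ hp

lemma G_zero {p : PR K} (hp : p ∈ G K 0) : p = C (coeff 0 p) := by
  ext s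
  rw [coeff_C]
  split_ifs with h
  · rw [h]
  · by_contra h'
    have := hp s h'
    apply h
    ext i
    fin_cases i <;> simp <;> omega

lemma G_of_X_mul {j : ℤ} {p : PR K} (i : Fin 2) (h : X i * p ∈ G K j) : p ∈ G K (j - 2) := by
  intro s hs
  have := h (Finsupp.single i 1 + s) (by rwa [coeff_X_mul])
  fin_cases i <;> simp at this <;> omega

lemma G_div {j : ℤ} {p : PR K} (i : Fin 2) (h : p ∈ G K j) :
    p.divMonomial (Finsupp.single i 1) ∈ G K (j - 2) := by
  intro s hs
  rw [coeff_divMonomial] at hs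
  have := h _ hs
  fin_cases i <;> simp at this <;> omega

lemma G_mod {j : ℤ} {p : PR K} (t : Fin 2 →₀ ℕ) (h : p ∈ G K j) :
    p.modMonomial t ∈ G K j := by
  intro s hs
  by_cases hh : t ≤ s
  · rw [coeff_modMonomial_of_le _ hh] at hs; exact absurd rfl hs
  · rw [coeff_modMonomial_of_not_le _ hh] at hs
    exact h s hs

lemma G_gen {j : ℤ} {r : PR K} (h : r ∈ G K j) : ∃ p ∈ G K (j-2), ∃ q ∈ G K (j-2), ∃ c : K,
    r = X 0 * p + X 1 * q + C c := by
  have h1 := G_mod (Finsupp.single 0 1) h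
  have e1 := divMonomial_add_modMonomial_single r 0
  have e2 := divMonomial_add_modMonomial_single (r.modMonomial (Finsupp.single 0 1)) 1
  refine ⟨_, G_div 0 h, _, G_div 1 h1, coeff 0 r, ?_⟩
  rw [add_assoc]
  nth_rw 1 [← e1, ← e2]
  congr 2
  ext s
  rw [coeff_C]
  by_cases s1 : Finsupp.single 1 1 ≤ s
  · rw [coeff_modMonomial_of_le _ s1, if_neg]
    rintro rfl
    simpa using s1 1
  · rw [coeff_modMonomial_of_not_le _ s1]
    by_cases s0 : Finsupp.single 0 1 ≤ s
    · rw [coeff_modMonomial_of_le _ s0, if_neg]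
      rintro rfl
      simpa using s0 0
    · rw [coeff_modMonomial_of_not_le _ s0]
      rw [Finsupp.single_le_iff] at s0 s1
      have : s = 0 := by ext i; fin_cases i <;> simp <;> omega
      rw [this, if_pos rfl]

lemma G_syz {j : ℤ} {a b : PR K} (ha : a ∈ G K j) (hb : b ∈ G K j)
    (h : X 0 * a + X 1 * b ∈ G K (j + 1)) : ∃ g ∈ G K (j - 2),
    a + X 1 * g ∈ G K (j - 1) ∧ b - X 0 * g ∈ G K (j - 1) := by
  have e1 := divMonomial_add_modMonomial_single b 0
  set g := b.divMonomial (Finsupp.single 0 1) with hg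
  have hb' : b - X 0 * g ∈ G K (j - 1) := by
    rw [sub_eq_of_eq_add' e1.symm]
    intro s hs
    have hs' := G_mod _ hb s hs
    by_contra hlt
    by_cases s0 : Finsupp.single 0 1 ≤ s
    · rw [coeff_modMonomial_of_le _ s0] at hs; exact hs rfl
    rw [coeff_modMonomial_of_not_le _ s0] at hs
    rw [Finsupp.single_le_iff] at s0
    have := h (Finsupp.single 1 1 + s) (by
      rw [coeff_add, coeff_X_mul, coeff_X_mul', if_neg]
      · simpa using hs
      · simp; omega)
    simp at this
    omega
  refine ⟨g, G_div 0 hb, ?_, hb'⟩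
  have : X 0 * (a + X 1 * g) ∈ G K (j + 1) := by
    have e : X 0 * (a + X 1 * g) = (X 0 * a + X 1 * b) - X 1 * (b - X 0 * g) := by ring
    rw [e]
    exact sub_mem h (G_cast (G_mul (G_X 1) hb') (by ring))
  exact G_cast (G_of_X_mul 0 this) (by ring)

variable (a b g : K) (hb : b ≠ 0)

/-- the forward substitution -/
def sgF : PR K →ₐ[K] PR K := aeval ![X 1, C a * X 1 + C b * X 0 + C g]
/-- the backward substitution -/
def sgB : PR K →ₐ[K] PR K := aeval ![C b⁻¹ * (X 1 - C a * X 0 - C g), X 0]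

include hb in
lemma sg1 : (sgF a b g).comp (sgB a b g) = AlgHom.id K (PR K) := by
  have h : (C b⁻¹ : PR K) * C b = 1 := by rw [← C_mul, inv_mul_cancel₀ hb, C_1]
  ext1 i
  fin_cases i
  · simp [sgF, sgB, algHom_C, algebraMap_eq]
    linear_combination (X 0) * h
  · simp [sgF, sgB]

include hb in
lemma sg2 : (sgB a b g).comp (sgF a b g) = AlgHom.id K (PR K) := by
  have h : (C b⁻¹ : PR K) * C b = 1 := by rw [← C_mul, inv_mul_cancel₀ hb, C_1]
  ext1 i
  fin_cases i
  · simp [sgF, sgB]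
  · simp [sgF, sgB, algHom_C, algebraMap_eq]
    linear_combination (X 1 - C a * X 0 - C g) * h

/-- the automorphism -/
def sg : PR K ≃ₐ[K] PR K := AlgEquiv.ofAlgHom (sgF a b g) (sgB a b g) (sg1 a b g hb) (sg2 a b g hb)

/-- orbit of the first variable -/
def l (n : ℤ) : PR K := (sg a b g hb ^ n) (X 0)

lemma sg_apply (r : PR K) : sg a b g hb r = sgF a b g r := rfl
lemma sg_X0 : sg a b g hb (X 0) = X 1 := by simp [sg_apply, sgF]
lemma sg_X1 : sg a b g hb (X 1) = C a * X 1 + C b * X 0 + C g := by simp [sg_apply, sgF]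
lemma l_zero : l a b g hb 0 = X 0 := rfl
lemma sg_l (n : ℤ) : sg a b g hb (l a b g hb n) = l a b g hb (n + 1) := by
  rw [l, l, add_comm, zpow_add, zpow_one, AlgEquiv.mul_apply]
lemma l_one : l a b g hb 1 = X 1 := by
  rw [← sg_X0 a b g hb, l, zpow_one]
lemma l_rec (n : ℤ) : l a b g hb (n + 2) = C a * l a b g hb (n + 1) + C b * l a b g hb n + C g := by
  have : (sg a b g hb ^ n) (l a b g hb 2) =
      (sg a b g hb ^ n) (C a * l a b g hb 1 + C b * l a b g hb 0 + C g) := by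
    congr 1
    rw [show (2 : ℤ) = 1 + 1 by rfl, ← sg_l, l_one, l_zero, sg_X1]
  have hl : ∀ m, (sg a b g hb ^ n) (l a b g hb m) = l a b g hb (n + m) := by
    intro m
    rw [l, l, zpow_add, AlgEquiv.mul_apply]
  have hC : ∀ c, (sg a b g hb ^ n) (C c) = C c := fun c => AlgEquiv.commutes _ c
  simpa only [map_add, map_mul, hl, hC, add_zero] using this

lemma G_C (c : K) : (C c : PR K) ∈ G K 0 := by
  have := (G K 0).smul_mem c G_one
  rwa [smul_eq_C_mul, mul_one] at this

lemma G_C_mul (c : K) {j : ℤ} {p : PR K} (hp : p ∈ G K j) : C c * p ∈ G K j := by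
  rw [← smul_eq_C_mul]; exact (G K j).smul_mem c hp

lemma l_mem (n : ℤ) : l a b g hb n ∈ G K 2 := by
  have key : l a b g hb n ∈ G K 2 ∧ l a b g hb (n + 1) ∈ G K 2 := by
    have h : (C b⁻¹ : PR K) * C b = 1 := by rw [← C_mul, inv_mul_cancel₀ hb, C_1]
    have hC : ∀ c : K, (C c : PR K) ∈ G K 2 := fun c => G_mono (by norm_num) (G_C c)
    induction n using Int.induction_on with
    | zero => 
      rw [zero_add, l_zero, l_one]; exact ⟨G_X 0, G_X 1⟩
    | succ i ih =>
      refine ⟨ih.2, ?_⟩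
      rw [show (i : ℤ) + 1 + 1 = i + 2 by ring, l_rec]
      exact add_mem (add_mem (G_C_mul _ ih.2) (G_C_mul _ ih.1)) (hC _)
    | pred i ih =>
      refine ⟨?_, by rw [sub_add_cancel]; exact ih.1⟩
      have := l_rec a b g hb (-(i : ℤ) - 1)
      rw [show -(i : ℤ) - 1 + 2 = -i + 1 by ring, show -(i : ℤ) - 1 + 1 = -i by ring] at this
      have e : l a b g hb (-(i : ℤ) - 1) = C b⁻¹ * (l a b g hb (-i + 1) - C a * l a b g hb (-i) - C g) := by
        rw [this]; linear_combination -(l a b g hb (-(i : ℤ) - 1)) * h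
      rw [e]
      exact G_C_mul _ (sub_mem (sub_mem ih.2 (G_C_mul _ ih.1)) (hC _))
  exact key.1

end Model
end DUM

namespace DUM
open MvPolynomial

section Ops
variable {K : Type*} [Field K] (a b g : K) (hb : b ≠ 0)

/-- the model module -/
abbrev VM (K : Type*) [Field K] := ℤ →₀ PR K

/-- coefficient of the up operator -/
def cf (n : ℤ) : PR K := if 0 ≤ n then 1 else l a b g hb (n + 1)
/-- coefficient of the down operator -/
def df (n : ℤ) : PR K := if n ≤ 0 then 1 else l a b g hb n

lemma cf_nn {n : ℤ} (h : 0 ≤ n) : cf a b g hb n = 1 := if_pos h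
lemma cf_neg {n : ℤ} (h : n < 0) : cf a b g hb n = l a b g hb (n + 1) := if_neg (by omega)
lemma df_np {n : ℤ} (h : n ≤ 0) : df a b g hb n = 1 := if_pos h
lemma df_pos {n : ℤ} (h : 0 < n) : df a b g hb n = l a b g hb n := if_neg (by omega)

/-- up operator -/
def Uop : VM K →ₗ[K] VM K :=
  Finsupp.lsum K fun n => Finsupp.lsingle (n + 1) ∘ₗ LinearMap.mulLeft K (cf a b g hb n)
/-- down operator -/
def Dop : VM K →ₗ[K] VM K :=
  Finsupp.lsum K fun n => Finsupp.lsingle (n - 1) ∘ₗ LinearMap.mulLeft K (df a b g hb n)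

lemma Uop_single (n : ℤ) (r : PR K) : Uop a b g hb (Finsupp.single n r) =
    Finsupp.single (n + 1) (cf a b g hb n * r) := by
  simp [Uop]
lemma Dop_single (n : ℤ) (r : PR K) : Dop a b g hb (Finsupp.single n r) =
    Finsupp.single (n - 1) (df a b g hb n * r) := by
  simp [Dop]

lemma Uop_apply (v : VM K) (m : ℤ) : Uop a b g hb v m = cf a b g hb (m - 1) * v (m - 1) := by
  induction v using Finsupp.induction_linear with
  | zero => simp
  | add p q hp hq => simp [hp, hq, mul_add]
  | single n r =>
    rw [Uop_single]
    by_cases h : n = m - 1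
    · subst h; simp
    · rw [Finsupp.single_eq_of_ne (by omega), Finsupp.single_eq_of_ne (by omega), mul_zero]

lemma Dop_apply (v : VM K) (m : ℤ) : Dop a b g hb v m = df a b g hb (m + 1) * v (m + 1) := by
  induction v using Finsupp.induction_linear with
  | zero => simp
  | add p q hp hq => simp [hp, hq, mul_add]
  | single n r =>
    rw [Dop_single]
    by_cases h : n = m + 1
    · subst h; simp
    · rw [Finsupp.single_eq_of_ne (by omega), Finsupp.single_eq_of_ne (by omega), mul_zero]

lemma dcf (m : ℤ) : df a b g hb (m + 1) * cf a b g hb m = l a b g hb (m + 1) := by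
  rcases le_or_gt 0 m with h | h
  · rw [cf_nn _ _ _ _ h, df_pos _ _ _ _ (by omega), mul_one]
  · rw [cf_neg _ _ _ _ h, df_np _ _ _ _ (by omega), one_mul]

lemma DU_apply (v : VM K) (m : ℤ) :
    Dop a b g hb (Uop a b g hb v) m = l a b g hb (m + 1) * v m := by
  rw [Dop_apply, Uop_apply, add_sub_cancel_right, ← mul_assoc, dcf]

lemma UD_apply (v : VM K) (m : ℤ) :
    Uop a b g hb (Dop a b g hb v) m = l a b g hb m * v m := by
  have := dcf a b g hb (m - 1)
  rw [sub_add_cancel] at this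
  rw [Uop_apply, Dop_apply, sub_add_cancel, ← mul_assoc, mul_comm (cf a b g hb (m - 1)), this]

lemma rel1 : Dop a b g hb * Uop a b g hb * Uop a b g hb =
    a • (Uop a b g hb * Dop a b g hb * Uop a b g hb) +
    b • (Uop a b g hb * Uop a b g hb * Dop a b g hb) + g • Uop a b g hb := by
  refine LinearMap.ext fun v => Finsupp.ext fun m => ?_
  have e := l_rec a b g hb (m - 1)
  rw [show m - 1 + 2 = m + 1 by ring, sub_add_cancel] at e
  simp only [Module.End.mul_apply, LinearMap.add_apply, LinearMap.smul_apply, Finsupp.add_apply,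
    Finsupp.smul_apply]
  rw [DU_apply, UD_apply, Uop_apply, Uop_apply _ _ _ _ (Uop a b g hb (Dop a b g hb v)), UD_apply, e]
  simp only [smul_eq_C_mul]
  ring

lemma rel2 : Dop a b g hb * Dop a b g hb * Uop a b g hb =
    a • (Dop a b g hb * Uop a b g hb * Dop a b g hb) +
    b • (Uop a b g hb * Dop a b g hb * Dop a b g hb) + g • Dop a b g hb := by
  refine LinearMap.ext fun v => Finsupp.ext fun m => ?_
  have e := l_rec a b g hb m
  simp only [Module.End.mul_apply, LinearMap.add_apply, LinearMap.smul_apply, Finsupp.add_apply,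
    Finsupp.smul_apply]
  rw [Dop_apply, DU_apply, DU_apply, UD_apply, Dop_apply, show m + 1 + 1 = m + 2 by ring, e]
  simp only [smul_eq_C_mul]
  ring

/-- filtration of the model -/
def FV (K : Type*) [Field K] (k : ℤ) : Submodule K (VM K) where
  carrier := {v | ∀ n, v n ∈ G K (k - |n|)}
  zero_mem' := fun n => zero_mem _
  add_mem' := fun hp hq n => add_mem (hp n) (hq n)
  smul_mem' := fun c p hp n => (G K _).smul_mem c (hp n)

lemma mem_FV {k : ℤ} {v : VM K} : v ∈ FV K k ↔ ∀ n, v n ∈ G K (k - |n|) := Iff.rfl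

lemma FV_mk (k : ℤ) (f : ℤ → PR K) (hf : ∀ n, f n ∈ G K (k - |n|)) :
    ∃ v ∈ FV K k, ∀ n, v n = f n := by
  have : (Function.support f).Finite := by
    apply (Set.finite_Icc (-k) k).subset
    intro n hn
    by_contra h
    apply hn
    apply G_neg _ (hf n)
    by_contra h'
    apply h
    rw [Set.mem_Icc]
    have : |n| ≤ k := by omega
    exact abs_le.mp this
  exact ⟨Finsupp.ofSupportFinite f this, hf, fun n => rfl⟩

lemma FV_mono : Monotone (FV K) := fun _ _ h _ hv n => G_mono (by omega) (hv n)

lemma FV_neg (k : ℤ) (hk : k < 0) : FV K k = ⊥ := by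
  rw [eq_bot_iff]
  intro v hv
  rw [Submodule.mem_bot]
  ext1 n
  exact G_neg (by have := abs_nonneg n; omega) (hv n)

lemma FV_one : (Finsupp.single 0 1 : VM K) ∈ FV K 0 := by
  intro n
  by_cases h : n = 0
  · subst h; simpa using G_one
  · rw [Finsupp.single_eq_of_ne h]; exact zero_mem _

lemma FV_zero (v : VM K) (hv : v ∈ FV K 0) : ∃ c : K, v = c • Finsupp.single 0 1 := by
  refine ⟨coeff 0 (v 0), ?_⟩
  ext1 n
  by_cases h : n = 0
  · subst h
    rw [Finsupp.smul_apply, Finsupp.single_eq_same, smul_eq_C_mul, mul_one]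
    exact G_zero (by simpa using hv 0)
  · rw [Finsupp.smul_apply, Finsupp.single_eq_of_ne h, smul_zero]
    apply G_neg _ (hv n)
    have := abs_pos.mpr h
    omega

lemma FV_ex (v : VM K) : ∃ k, v ∈ FV K k := by
  induction v using Finsupp.induction_linear with
  | zero => exact ⟨0, zero_mem _⟩
  | add p q hp hq =>
    obtain ⟨i, hi⟩ := hp
    obtain ⟨j, hj⟩ := hq
    exact ⟨max i j, add_mem (FV_mono (le_max_left _ _) hi) (FV_mono (le_max_right _ _) hj)⟩
  | single n r =>
    obtain ⟨j, hj⟩ : ∃ j, r ∈ G K j := by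
      refine ⟨∑ s ∈ r.support, 2 * ((s 0 : ℤ) + s 1), fun s hs => ?_⟩
      exact Finset.single_le_sum (f := fun s : Fin 2 →₀ ℕ => 2 * ((s 0 : ℤ) + s 1))
        (fun _ _ => by positivity) (mem_support_iff.mpr hs)
    refine ⟨j + |n|, fun m => ?_⟩
    by_cases h : m = n
    · subst h; simpa using hj
    · rw [Finsupp.single_eq_of_ne h]; exact zero_mem _

lemma Uop_mem {k : ℤ} {v : VM K} (hv : v ∈ FV K k) : Uop a b g hb v ∈ FV K (k + 1) := by
  intro n
  rw [Uop_apply]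
  have hn := hv (n - 1)
  rcases le_or_gt 0 (n - 1) with h | h
  · rw [cf_nn _ _ _ _ h, one_mul]
    rw [abs_of_nonneg h] at hn
    rw [abs_of_nonneg (by omega)]
    exact G_mono (by omega) hn
  · rw [cf_neg _ _ _ _ h]
    rw [abs_of_neg h] at hn
    rw [abs_of_nonpos (by omega)]
    exact G_cast (G_mul (l_mem _ _ _ _ _) hn) (by omega)

lemma Dop_mem {k : ℤ} {v : VM K} (hv : v ∈ FV K k) : Dop a b g hb v ∈ FV K (k + 1) := by
  intro n
  rw [Dop_apply]
  have hn := hv (n + 1)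
  rcases le_or_gt (n + 1) 0 with h | h
  · rw [df_np _ _ _ _ h, one_mul]
    rw [abs_of_nonpos h] at hn
    rw [abs_of_nonpos (by omega)]
    exact G_mono (by omega) hn
  · rw [df_pos _ _ _ _ h]
    rw [abs_of_pos h] at hn
    rw [abs_of_nonneg (by omega)]
    exact G_cast (G_mul (l_mem _ _ _ _ _) hn) (by omega)

lemma FV_gen (k : ℤ) (hk : 1 ≤ k) (v : VM K) (hv : v ∈ FV K k) :
    ∃ x ∈ FV K (k-1), ∃ y ∈ FV K (k-1), ∃ z ∈ FV K (k-1),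
      v = Uop a b g hb x + Dop a b g hb y + z := by
  have h0 := hv 0
  obtain ⟨p, hp, q, hq, c, hc⟩ := G_gen h0
  rw [abs_zero] at hp hq
  obtain ⟨x, hx, hx'⟩ := FV_mk (k - 1)
    (fun n => if 0 ≤ n then v (n + 1) else if n = -1 then p else 0) (by
      intro n
      split_ifs with h1 h2
      · have := hv (n + 1)
        rw [abs_of_nonneg (by omega)] at this
        rw [abs_of_nonneg h1]
        exact G_cast this (by ring)
      · subst h2
        exact G_cast hp (by norm_num; ring)
      · exact zero_mem _)
  obtain ⟨y, hy, hy'⟩ := FV_mk (k - 1)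
    (fun n => if n ≤ 0 then v (n - 1) else if n = 1 then q else 0) (by
      intro n
      split_ifs with h1 h2
      · have := hv (n - 1)
        rw [abs_of_nonpos (by omega)] at this
        rw [abs_of_nonpos h1]
        exact G_cast this (by ring)
      · subst h2
        exact G_cast hq (by norm_num; ring)
      · exact zero_mem _)
  refine ⟨x, hx, y, hy, c • Finsupp.single 0 1,
    FV_mono (by omega) ((FV K 0).smul_mem c FV_one), ?_⟩
  ext1 n
  rw [Finsupp.add_apply, Finsupp.add_apply, Uop_apply, Dop_apply, hx', hy', Finsupp.smul_apply]
  rcases lt_trichotomy n 0 with h | h | h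
  · rw [if_neg (by omega), if_neg (by omega), if_pos (by omega), df_np _ _ _ _ (by omega),
      Finsupp.single_eq_of_ne (by omega), add_sub_cancel_right]
    simp
  · subst h
    rw [hc]
    norm_num
    rw [cf_neg _ _ _ _ (by norm_num), df_pos _ _ _ _ (by norm_num), l_one, smul_eq_C_mul, mul_one]
    rfl
  · rw [if_pos (by omega), if_neg (by omega), if_neg (by omega), cf_nn _ _ _ _ (by omega),
      Finsupp.single_eq_of_ne (by omega), sub_add_cancel]
    simp

/-- first syzygy operator -/
def S1 (c : VM K) : VM K :=
  -(a • Dop a b g hb (Uop a b g hb c) + b • Uop a b g hb (Dop a b g hb c) + g • c)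
/-- second syzygy operator -/
def S2 (e : VM K) : VM K := -(b • Dop a b g hb (Dop a b g hb e))
/-- third syzygy operator -/
def S3 (c : VM K) : VM K := Uop a b g hb (Uop a b g hb c)
/-- fourth syzygy operator -/
def S4 (e : VM K) : VM K :=
  Dop a b g hb (Uop a b g hb e) - a • Uop a b g hb (Dop a b g hb e) - g • e

lemma S1_apply (c : VM K) (m : ℤ) : S1 a b g hb c m = - (l a b g hb (m + 2) * c m) := by
  rw [S1]
  simp only [Finsupp.neg_apply, Finsupp.add_apply, Finsupp.smul_apply, DU_apply, UD_apply, l_rec,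
    smul_eq_C_mul]
  ring

lemma S2_apply (e : VM K) (m : ℤ) : S2 a b g hb e m =
    - (C b * (df a b g hb (m + 1) * df a b g hb (m + 2) * e (m + 2))) := by
  rw [S2]
  simp only [Finsupp.neg_apply, Finsupp.smul_apply, Dop_apply, smul_eq_C_mul,
    show m + 1 + 1 = m + 2 by ring]
  ring

lemma S3_apply (c : VM K) (m : ℤ) : S3 a b g hb c m =
    cf a b g hb (m - 1) * cf a b g hb (m - 2) * c (m - 2) := by
  rw [S3]
  simp only [Uop_apply, show m - 1 - 1 = m - 2 by ring]
  ring

lemma S4_apply (e : VM K) (m : ℤ) : S4 a b g hb e m = C b * l a b g hb (m - 1) * e m := by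
  rw [S4]
  have h := l_rec a b g hb (m - 1)
  rw [show m - 1 + 2 = m + 1 by ring, sub_add_cancel] at h
  simp only [Finsupp.sub_apply, Finsupp.smul_apply, DU_apply, UD_apply, h,
    smul_eq_C_mul]
  ring

lemma CbCb {b : K} (hb : b ≠ 0) : (C b : PR K) * C b⁻¹ = 1 := by
  rw [← C_mul, mul_inv_cancel₀ hb, C_1]

theorem E1V (k : ℤ) (x : VM K) (hx : x ∈ FV K k) (y : VM K) (hy : y ∈ FV K k)
    (h : Uop a b g hb x + Dop a b g hb y ∈ FV K k) :
    ∃ c ∈ FV K (k-2), ∃ e ∈ FV K (k-2),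
      x - (S1 a b g hb c + S2 a b g hb e) ∈ FV K (k-1) ∧
      y - (S3 a b g hb c + S4 a b g hb e) ∈ FV K (k-1) := by
  have hC := CbCb hb
  have h' : ∀ n, cf a b g hb (n - 1) * x (n - 1) + df a b g hb (n + 1) * y (n + 1)
      ∈ G K (k - |n|) := by
    intro n
    have := h n
    rwa [Finsupp.add_apply, Uop_apply, Dop_apply] at this
  obtain ⟨q, hq, hq1, hq2⟩ : ∃ q ∈ G K (k - 1 - 2),
      x (-1) + X 1 * q ∈ G K (k - 1 - 1) ∧ y 1 - X 0 * q ∈ G K (k - 1 - 1) := by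
    apply G_syz
    · simpa using hx (-1)
    · simpa using hy 1
    · have := h' 0
      norm_num at this
      rw [cf_neg _ _ _ _ (by norm_num), df_pos _ _ _ _ (by norm_num), l_one] at this
      rw [sub_add_cancel]
      exact this
  obtain ⟨c, hc, hc'⟩ := FV_mk (k - 2)
    (fun n => if 0 ≤ n then y (n + 2) else if n = -1 then q else 0) (by
      intro n
      split_ifs with h1 h2
      · have := hy (n + 2)
        rw [abs_of_nonneg (by omega)] at this
        rw [abs_of_nonneg h1]
        exact G_cast this (by ring)
      · subst h2
        exact G_cast hq (by norm_num; ring)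
      · exact zero_mem _)
  obtain ⟨e, he, he'⟩ := FV_mk (k - 2)
    (fun n => if n ≤ 0 then - (C b⁻¹ * x (n - 2)) else 0) (by
      intro n
      split_ifs with h1
      · have := hx (n - 2)
        rw [abs_of_nonpos (by omega)] at this
        rw [abs_of_nonpos h1]
        exact neg_mem (G_C_mul _ (G_cast this (by ring)))
      · exact zero_mem _)
  refine ⟨c, hc, e, he, ?_, ?_⟩
  · intro m
    rw [Finsupp.sub_apply, Finsupp.add_apply, S1_apply, S2_apply, hc', he']
    rcases lt_trichotomy m (-1) with hm | hm | hm
    · rw [if_neg (by omega), if_neg (by omega), if_pos (by omega), df_np _ _ _ _ (by omega),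
        df_np _ _ _ _ (by omega), add_sub_cancel_right]
      convert zero_mem (G K _) using 1
      linear_combination (-x m) * hC
    · subst hm
      norm_num
      rw [l_one]
      exact G_cast hq1 (by ring)
    · rw [if_pos (by omega), if_neg (by omega), abs_of_nonneg (by omega)]
      have := h' (m + 1)
      rw [abs_of_nonneg (by omega), cf_nn _ _ _ _ (by omega), df_pos _ _ _ _ (by omega),
        add_sub_cancel_right, show m + 1 + 1 = m + 2 by ring] at this
      convert this using 1
      · congr 1; ring
      · ring
  · intro m
    rw [Finsupp.sub_apply, Finsupp.add_apply, S3_apply, S4_apply, hc', he']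
    rcases lt_trichotomy m 1 with hm | hm | hm
    · rw [if_neg (by omega), if_neg (by omega), if_pos (by omega), abs_of_nonpos (by omega)]
      have := h' (m - 1)
      rw [abs_of_neg (by omega), cf_neg _ _ _ _ (by omega), df_np _ _ _ _ (by omega),
        sub_add_cancel, show m - 1 - 1 = m - 2 by ring, show m - 1 + 1 = m by ring] at this
      convert this using 1
      · congr 1; ring
      · linear_combination (l a b g hb (m - 1) * x (m - 2)) * hC
    · subst hm
      norm_num
      rw [cf_nn _ _ _ _ (by norm_num), cf_neg _ _ _ _ (by norm_num), one_mul]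
      norm_num
      exact G_cast hq2 (by ring)
    · rw [if_pos (by omega), if_neg (by omega), cf_nn _ _ _ _ (by omega), cf_nn _ _ _ _ (by omega),
        sub_add_cancel]
      convert zero_mem (G K _) using 1
      ring

theorem E2V (k : ℤ) (c : VM K) (hc : c ∈ FV K k) (e : VM K) (he : e ∈ FV K k)
    (h1 : S1 a b g hb c + S2 a b g hb e ∈ FV K (k+1))
    (h2 : S3 a b g hb c + S4 a b g hb e ∈ FV K (k+1)) :
    ∃ f ∈ FV K (k-1), c - (-(b • Dop a b g hb f)) ∈ FV K (k-1) ∧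
      e - Uop a b g hb f ∈ FV K (k-1) := by
  have hC := CbCb hb
  obtain ⟨f, hf, hf'⟩ := FV_mk (k - 1)
    (fun n => if 0 ≤ n then e (n + 1) else - (C b⁻¹ * c (n - 1))) (by
      intro n
      split_ifs with h1
      · have := he (n + 1)
        rw [abs_of_nonneg (by omega)] at this
        rw [abs_of_nonneg h1]
        exact G_cast this (by ring)
      · have := hc (n - 1)
        rw [abs_of_neg (by omega)] at this
        rw [abs_of_neg (by omega)]
        exact neg_mem (G_C_mul _ (G_cast this (by ring))))
  refine ⟨f, hf, ?_, ?_⟩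
  · intro m
    rw [Finsupp.sub_apply, Finsupp.neg_apply, Finsupp.smul_apply, Dop_apply, hf', smul_eq_C_mul]
    rcases lt_trichotomy m (-1) with hm | hm | hm
    · rw [if_neg (by omega), df_np _ _ _ _ (by omega), add_sub_cancel_right]
      convert zero_mem (G K _) using 1
      linear_combination (- c m) * hC
    · subst hm
      have := h2 1
      rw [Finsupp.add_apply, S3_apply, S4_apply, cf_nn _ _ _ _ (by norm_num),
        cf_neg _ _ _ _ (by norm_num)] at this
      norm_num at this
      rw [l_zero] at this
      norm_num
      rw [df_np _ _ _ _ (by norm_num)]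
      have := G_of_X_mul (p := c (-1) + C b * (1 * e 1)) 0 (j := k)
        (by convert this using 1; ring)
      exact G_cast this (by ring)
    · have := h2 (m + 2)
      rw [Finsupp.add_apply, S3_apply, S4_apply, cf_nn _ _ _ _ (by omega),
        cf_nn _ _ _ _ (by omega), abs_of_nonneg (by omega), add_sub_cancel_right,
        show m + 2 - 1 = m + 1 by ring] at this
      rw [if_pos (by omega), df_pos _ _ _ _ (by omega), abs_of_nonneg (by omega),
        show m + 1 + 1 = m + 2 by ring]
      convert this using 1
      · congr 1; ring
      · ring
  · intro m
    rw [Finsupp.sub_apply, Uop_apply, hf']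
    rcases le_or_gt 1 m with hm | hm
    · rw [if_pos (by omega), cf_nn _ _ _ _ (by omega), sub_add_cancel, one_mul, sub_self]
      exact zero_mem _
    · have := h1 (m - 2)
      rw [Finsupp.add_apply, S1_apply, S2_apply, df_np _ _ _ _ (by omega),
        df_np _ _ _ _ (by omega), abs_of_neg (by omega), sub_add_cancel] at this
      rw [if_neg (by omega), cf_neg _ _ _ _ (by omega), abs_of_nonpos (by omega), sub_add_cancel,
        show m - 1 - 1 = m - 2 by ring]
      have := G_C_mul (-b⁻¹) this
      convert this using 1
      · congr 1; ring
      · rw [map_neg]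
        linear_combination (- e m) * hC

theorem E3V (k : ℤ) (f : VM K) (h1 : -(b • Dop a b g hb f) ∈ FV K k)
    (h2 : Uop a b g hb f ∈ FV K k) : f ∈ FV K (k - 1) := by
  intro n
  rcases le_or_gt 0 n with h | h
  · have := h2 (n + 1)
    rw [Uop_apply, add_sub_cancel_right, cf_nn _ _ _ _ h, one_mul, abs_of_nonneg (by omega)] at this
    rw [abs_of_nonneg h]
    exact G_cast this (by ring)
  · have h3 := (FV K k).smul_mem (-b⁻¹) h1
    rw [smul_neg, neg_smul, neg_neg, smul_smul, inv_mul_cancel₀ hb, one_smul] at h3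
    have := h3 (n - 1)
    rw [Dop_apply, sub_add_cancel, df_np _ _ _ _ h.le, one_mul, abs_of_neg (by omega)] at this
    rw [abs_of_neg h]
    exact G_cast this (by ring)

end Ops
end DUM

namespace DUM
open MvPolynomial

section Bij
variable {K : Type*} [Field K] {a b g : K} {hb : b ≠ 0} {A : Type*} [Ring A] [Algebra K A] {U D : A}

lemma exists_rho (r1 : D * U * U = a • (U * D * U) + b • (U * U * D) + g • U)
    (r2 : D * D * U = a • (D * U * D) + b • (U * D * D) + g • D) :
    ∃ ρ : PR K →ₐ[K] A, ρ (X 0) = U * D ∧ ρ (X 1) = D * U := by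
  have hcomm : (U * D) * (D * U) = (D * U) * (U * D) := by
    have e1 : (U * D) * (D * U) = U * (D * D * U) := by noncomm_ring
    have e2 : (D * U) * (U * D) = (D * U * U) * D := by noncomm_ring
    rw [e1, e2, r1, r2]
    simp only [mul_add, add_mul, mul_smul_comm, smul_mul_assoc]
    simp only [mul_assoc]
  have hc : ∀ x ∈ ({U * D, D * U} : Set A), ∀ y ∈ ({U * D, D * U} : Set A), x * y = y * x := by
    rintro x (rfl | rfl) y (rfl | rfl)
    · rfl
    · exact hcomm
    · exact hcomm.symm
    · rfl
  let Cc := Algebra.adjoin K ({U * D, D * U} : Set A)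
  have hmc : IsMulCommutative Cc := Algebra.isMulCommutative_adjoin K hc
  let _ : CommRing Cc := {(inferInstance : Ring Cc) with mul_comm := hmc.is_comm.comm}
  have h0 : U * D ∈ Cc := Algebra.subset_adjoin (by simp)
  have h1 : D * U ∈ Cc := Algebra.subset_adjoin (by simp)
  let φ : PR K →ₐ[K] Cc := aeval ![⟨U * D, h0⟩, ⟨D * U, h1⟩]
  refine ⟨Cc.val.comp φ, ?_, ?_⟩
  · rw [AlgHom.comp_apply]
    have : φ (X 0) = ⟨U * D, h0⟩ := by simp [φ]
    rw [this]; rfl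
  · rw [AlgHom.comp_apply]
    have : φ (X 1) = ⟨D * U, h1⟩ := by simp [φ]
    rw [this]; rfl

variable {ρ : PR K →ₐ[K] A}

lemma rho_U (r1 : D * U * U = a • (U * D * U) + b • (U * U * D) + g • U)
    (h0 : ρ (X 0) = U * D) (h1 : ρ (X 1) = D * U) (r : PR K) :
    ρ r * U = U * ρ (sg a b g hb r) := by
  induction r using MvPolynomial.induction_on with
  | C c =>
    have : sg a b g hb (C c) = C c := AlgEquiv.commutes _ c
    rw [this, ← algebraMap_eq, AlgHom.commutes, Algebra.commutes]
  | add p q hp hq => rw [map_add, map_add, map_add, add_mul, mul_add, hp, hq]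
  | mul_X p i hp =>
    have hi : ρ (X i) * U = U * ρ (sg a b g hb (X i)) := by
      fin_cases i
      · change ρ (X 0) * U = U * ρ (sg a b g hb (X 0))
        rw [sg_X0, h0, h1, mul_assoc]
      · change ρ (X 1) * U = U * ρ (sg a b g hb (X 1))
        rw [sg_X1, h1, ← smul_eq_C_mul, ← smul_eq_C_mul, map_add, map_add, map_smul, map_smul,
          h0, h1, r1, ← algebraMap_eq, AlgHom.commutes, Algebra.algebraMap_eq_smul_one]
        simp only [mul_add, mul_smul_comm, mul_assoc, mul_one]
    rw [map_mul, map_mul, map_mul, mul_assoc, hi, ← mul_assoc, hp, mul_assoc]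

lemma rho_D (r2 : D * D * U = a • (D * U * D) + b • (U * D * D) + g • D)
    (h0 : ρ (X 0) = U * D) (h1 : ρ (X 1) = D * U) (r : PR K) :
    D * ρ r = ρ (sg a b g hb r) * D := by
  induction r using MvPolynomial.induction_on with
  | C c =>
    have : sg a b g hb (C c) = C c := AlgEquiv.commutes _ c
    rw [this, ← algebraMap_eq, AlgHom.commutes, Algebra.commutes]
  | add p q hp hq => rw [map_add, map_add, map_add, add_mul, mul_add, hp, hq]
  | mul_X p i hp =>
    have hi : D * ρ (X i) = ρ (sg a b g hb (X i)) * D := by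
      fin_cases i
      · change D * ρ (X 0) = ρ (sg a b g hb (X 0)) * D
        rw [sg_X0, h0, h1, mul_assoc]
      · change D * ρ (X 1) = ρ (sg a b g hb (X 1)) * D
        rw [sg_X1, h1, ← smul_eq_C_mul, ← smul_eq_C_mul, map_add, map_add, map_smul, map_smul,
          h0, h1, ← mul_assoc, r2, ← algebraMap_eq, AlgHom.commutes, Algebra.algebraMap_eq_smul_one]
        simp only [add_mul, smul_mul_assoc, one_mul]
    rw [map_mul, map_mul, map_mul, ← mul_assoc, hp, mul_assoc, hi, mul_assoc]

lemma rho_U_pow (r1 : D * U * U = a • (U * D * U) + b • (U * U * D) + g • U)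
    (h0 : ρ (X 0) = U * D) (h1 : ρ (X 1) = D * U) (n : ℕ) (m : ℤ) :
    ρ (l a b g hb m) * U ^ n = U ^ n * ρ (l a b g hb (m + n)) := by
  induction n with
  | zero => simp
  | succ n ih =>
    rw [pow_succ, ← mul_assoc, ih, mul_assoc, rho_U (hb := hb) r1 h0 h1, sg_l, mul_assoc]
    push_cast
    rw [add_assoc]

lemma rho_D_pow (r2 : D * D * U = a • (D * U * D) + b • (U * D * D) + g • D)
    (h0 : ρ (X 0) = U * D) (h1 : ρ (X 1) = D * U) (n : ℕ) (m : ℤ) :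
    ρ (l a b g hb m) * D ^ n = D ^ n * ρ (l a b g hb (m - n)) := by
  induction n with
  | zero => simp
  | succ n ih =>
    have : l a b g hb (m - n) = sg a b g hb (l a b g hb (m - (n + 1 : ℕ))) := by
      rw [sg_l]; congr 1; push_cast; ring
    rw [pow_succ, ← mul_assoc, ih, mul_assoc, this, ← rho_D (hb := hb) r2 h0 h1, mul_assoc]

/-- monomial prefix -/
def pre (U D : A) (n : ℤ) : A := if 0 ≤ n then U ^ n.toNat else D ^ (-n).toNat

/-- candidate inverse -/
def psi (ρ : PR K →ₐ[K] A) (U D : A) : VM K →ₗ[K] A :=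
  Finsupp.lsum K fun n => LinearMap.mulLeft K (pre U D n) ∘ₗ ρ.toLinearMap

lemma psi_single (n : ℤ) (r : PR K) : psi ρ U D (Finsupp.single n r) = pre U D n * ρ r := by
  simp [psi]

lemma pre_U (r2 : D * D * U = a • (D * U * D) + b • (U * D * D) + g • D)
    (h0 : ρ (X 0) = U * D) (h1 : ρ (X 1) = D * U) (n : ℤ) :
    U * pre U D n = pre U D (n + 1) * ρ (cf a b g hb n) := by
  rcases le_or_gt 0 n with h | h
  · rw [cf_nn _ _ _ _ h, map_one, mul_one, pre, pre, if_pos h, if_pos (by omega), ← pow_succ']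
    congr 1; omega
  · obtain ⟨m, rfl⟩ : ∃ m : ℕ, n = -(m : ℤ) - 1 := ⟨(-n-1).toNat, by omega⟩
    have e : pre U D (-(m : ℤ)) = D ^ m := by
      rcases Nat.eq_zero_or_pos m with rfl | hm
      · simp [pre]
      · rw [pre, if_neg (by omega), neg_neg, Int.toNat_natCast]
    rw [cf_neg _ _ _ _ h, sub_add_cancel, e, pre, if_neg (by omega),
      show (-(-(m : ℤ) - 1)).toNat = m + 1 by omega, pow_succ', ← mul_assoc, ← h0]
    have := rho_D_pow (hb := hb) r2 h0 h1 m 0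
    rw [l_zero, zero_sub] at this
    exact this

lemma pre_D (r1 : D * U * U = a • (U * D * U) + b • (U * U * D) + g • U)
    (h0 : ρ (X 0) = U * D) (h1 : ρ (X 1) = D * U) (n : ℤ) :
    D * pre U D n = pre U D (n - 1) * ρ (df a b g hb n) := by
  rcases le_or_gt n 0 with h | h
  · have e : ∀ n : ℤ, n ≤ 0 → pre U D n = D ^ (-n).toNat := by
      intro n hn
      rcases hn.lt_or_eq with h | h
      · rw [pre, if_neg (by omega)]
      · subst h; simp [pre]
    rw [df_np _ _ _ _ h, map_one, mul_one, e n h, e (n - 1) (by omega), ← pow_succ']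
    congr 1; omega
  · obtain ⟨m, rfl⟩ : ∃ m : ℕ, n = (m : ℤ) + 1 := ⟨(n-1).toNat, by omega⟩
    rw [df_pos _ _ _ _ h, add_sub_cancel_right, pre, pre, if_pos (by omega), if_pos (by omega),
      show ((m : ℤ) + 1).toNat = m + 1 by omega, Int.toNat_natCast, pow_succ', ← mul_assoc, ← h1]
    have := rho_U_pow (hb := hb) r1 h0 h1 m 1
    rw [l_one, add_comm] at this
    exact this

variable (r1 : D * U * U = a • (U * D * U) + b • (U * U * D) + g • U)
  (r2 : D * D * U = a • (D * U * D) + b • (U * D * D) + g • D)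
  (h0 : ρ (X 0) = U * D) (h1 : ρ (X 1) = D * U)
  (hgen : Algebra.adjoin K {U, D} = ⊤)
  (T : A →ₐ[K] Module.End K (VM K)) (hTU : T U = Uop a b g hb) (hTD : T D = Dop a b g hb)

include r1 r2 h0 h1 hgen hTU hTD in
lemma psi_T (x : A) : ∀ v : VM K, psi ρ U D (T x v) = x * psi ρ U D v := by
  have hU : ∀ v : VM K, psi ρ U D (Uop a b g hb v) = U * psi ρ U D v := by
    intro v
    induction v using Finsupp.induction_linear with
    | zero => simp
    | add p q hp hq => simp only [map_add, mul_add, hp, hq]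
    | single n r =>
      rw [Uop_single, psi_single, psi_single, map_mul, ← mul_assoc, ← pre_U r2 h0 h1, mul_assoc]
  have hD : ∀ v : VM K, psi ρ U D (Dop a b g hb v) = D * psi ρ U D v := by
    intro v
    induction v using Finsupp.induction_linear with
    | zero => simp
    | add p q hp hq => simp only [map_add, mul_add, hp, hq]
    | single n r =>
      rw [Dop_single, psi_single, psi_single, map_mul, ← mul_assoc, ← pre_D r1 h0 h1, mul_assoc]
  have hx : x ∈ Algebra.adjoin K {U, D} := hgen ▸ Algebra.mem_top
  induction hx using Algebra.adjoin_induction with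
  | mem x hx =>
    rcases hx with rfl | rfl
    · rw [hTU]; exact hU
    · rw [hTD]; exact hD
  | algebraMap c =>
    intro v
    rw [AlgHom.commutes, Module.algebraMap_end_apply, map_smul, Algebra.smul_def]
  | add x y _ _ hx hy =>
    intro v
    rw [map_add, LinearMap.add_apply, map_add, hx, hy, add_mul]
  | mul x y _ _ hx hy =>
    intro v
    rw [map_mul, Module.End.mul_apply, hx, hy, mul_assoc]

include h0 h1 hTU hTD in
lemma T_psi (v : VM K) : T (psi ρ U D v) (Finsupp.single 0 1) = v := by
  have hρ : ∀ r s : PR K, T (ρ r) (Finsupp.single 0 s) = Finsupp.single 0 (r * s) := by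
    intro r
    induction r using MvPolynomial.induction_on with
    | C c =>
      intro s
      rw [← algebraMap_eq, AlgHom.commutes, AlgHom.commutes, Module.algebraMap_end_apply,
        Finsupp.smul_single, Algebra.smul_def]
    | add p q hp hq =>
      intro s
      rw [map_add, map_add, LinearMap.add_apply, hp, hq, add_mul, Finsupp.single_add]
    | mul_X p i hp =>
      intro s
      have hi : T (ρ (X i)) (Finsupp.single 0 s) = Finsupp.single 0 (X i * s) := by
        fin_cases i
        · change T (ρ (X 0)) (Finsupp.single 0 s) = Finsupp.single 0 (X 0 * s)
          rw [h0, map_mul, hTU, hTD, Module.End.mul_apply, Dop_single, Uop_single,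
            df_np _ _ _ _ le_rfl, cf_neg _ _ _ _ (by norm_num), one_mul]
          rfl
        · change T (ρ (X 1)) (Finsupp.single 0 s) = Finsupp.single 0 (X 1 * s)
          rw [h1, map_mul, hTU, hTD, Module.End.mul_apply, Uop_single, Dop_single,
            df_pos _ _ _ _ (by norm_num), cf_nn _ _ _ _ (by norm_num), one_mul, zero_add, l_one]
          rfl
      rw [map_mul, map_mul, Module.End.mul_apply, hi, hp, mul_assoc]
  have hUn : ∀ (n : ℕ) (s : PR K), T (U ^ n) (Finsupp.single 0 s) = Finsupp.single (n : ℤ) s := by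
    intro n s
    induction n with
    | zero => simp
    | succ n ih =>
      rw [pow_succ', map_mul, Module.End.mul_apply, ih, hTU, Uop_single,
        cf_nn _ _ _ _ (by omega), one_mul]
      push_cast; rfl
  have hDn : ∀ (n : ℕ) (s : PR K), T (D ^ n) (Finsupp.single 0 s) = Finsupp.single (-n : ℤ) s := by
    intro n s
    induction n with
    | zero => simp
    | succ n ih =>
      rw [pow_succ', map_mul, Module.End.mul_apply, ih, hTD, Dop_single,
        df_np _ _ _ _ (by omega), one_mul]
      congr 1; push_cast; ring
  induction v using Finsupp.induction_linear with
  | zero => simp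
  | add p q hp hq => rw [map_add, map_add, LinearMap.add_apply, hp, hq]
  | single n r =>
    rw [psi_single, map_mul, Module.End.mul_apply, hρ, mul_one, pre]
    split_ifs with h
    · rw [hUn]; congr 1; omega
    · rw [hDn]; congr 1; omega

include r1 r2 hgen hTU hTD in
theorem exists_equiv : ∃ Φ : A ≃ₗ[K] VM K, Φ 1 = Finsupp.single 0 1 ∧
    (∀ x, Φ (U * x) = Uop a b g hb (Φ x)) ∧ (∀ x, Φ (D * x) = Dop a b g hb (Φ x)) := by
  obtain ⟨ρ, h0, h1⟩ := exists_rho r1 r2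
  let Φ₀ : A →ₗ[K] VM K := (LinearMap.applyₗ (Finsupp.single 0 1 : VM K)) ∘ₗ T.toLinearMap
  have hΦ : ∀ x, Φ₀ x = T x (Finsupp.single 0 1) := fun x => rfl
  have e1 : Φ₀ ∘ₗ psi ρ U D = LinearMap.id := by
    refine LinearMap.ext fun v => ?_
    exact T_psi h0 h1 T hTU hTD v
  have e2 : psi ρ U D ∘ₗ Φ₀ = LinearMap.id := by
    refine LinearMap.ext fun x => ?_
    rw [LinearMap.comp_apply, hΦ, psi_T r1 r2 h0 h1 hgen T hTU hTD, psi_single]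
    simp [pre]
  refine ⟨LinearEquiv.ofLinearMap Φ₀ (psi ρ U D) e1 e2, ?_, ?_, ?_⟩
  · change T 1 _ = _
    rw [map_one]; rfl
  · intro x
    change T (U * x) _ = Uop a b g hb (T x _)
    rw [map_mul, hTU]; rfl
  · intro x
    change T (D * x) _ = Dop a b g hb (T x _)
    rw [map_mul, hTD]; rfl

end Bij

section Final
variable {K : Type*} [Field K] {a b g : K} {hb : b ≠ 0} {A : Type*} [Ring A] [Algebra K A] {U D : A}

/-- transported filtration -/
def FA (Φ : A ≃ₗ[K] VM K) (k : ℤ) : Submodule K A := (FV K k).comap Φ.toLinearMap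

set_option maxHeartbeats 800000 in
theorem main_left (r1 : D * U * U = a • (U * D * U) + b • (U * U * D) + g • U)
    (r2 : D * D * U = a • (D * U * D) + b • (U * D * D) + g • D)
    (Φ : A ≃ₗ[K] VM K) (hΦ1 : Φ 1 = Finsupp.single 0 1)
    (hΦU : ∀ x, Φ (U * x) = Uop a b g hb (Φ x)) (hΦD : ∀ x, Φ (D * x) = Dop a b g hb (Φ x))
    (P : Type*) [AddCommGroup P] [Module A P] [Module.Finite A P] [Module.Projective A P] :
    ∃ n m : ℕ, Nonempty ((P × (Fin n → A)) ≃ₗ[A] (Fin m → A)) := by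
  have mem : ∀ {k x}, x ∈ FA Φ k ↔ Φ x ∈ FV K k := Iff.rfl
  have mono : Monotone (FA Φ) := fun i j h x hx => FV_mono h hx
  have neg : ∀ k < 0, FA Φ k = ⊥ := by
    intro k hk
    rw [eq_bot_iff]
    intro x hx
    rw [mem, FV_neg k hk, Submodule.mem_bot] at hx
    rw [Submodule.mem_bot]
    exact Φ.map_eq_zero_iff.mp hx
  have one : (1 : A) ∈ FA Φ 0 := by rw [mem, hΦ1]; exact FV_one
  have zero : ∀ x ∈ FA Φ 0, ∃ c : K, x = algebraMap K A c := by
    intro x hx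
    obtain ⟨c, hc⟩ := FV_zero _ (mem.mp hx)
    refine ⟨c, Φ.injective ?_⟩
    rw [hc, Algebra.algebraMap_eq_smul_one, map_smul, hΦ1]
  have gen : ∀ k, 1 ≤ k → ∀ x ∈ FA Φ k, ∃ u ∈ FA Φ (k-1), ∃ v ∈ FA Φ (k-1), ∃ w ∈ FA Φ (k-1),
      x = U * u + D * v + w := by
    intro k hk x hx
    obtain ⟨u, hu, v, hv, w, hw, e⟩ := FV_gen a b g hb k hk _ (mem.mp hx)
    refine ⟨Φ.symm u, ?_, Φ.symm v, ?_, Φ.symm w, ?_, Φ.injective ?_⟩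
    · rw [mem, Φ.apply_symm_apply]; exact hu
    · rw [mem, Φ.apply_symm_apply]; exact hv
    · rw [mem, Φ.apply_symm_apply]; exact hw
    · simp only [map_add, hΦU, hΦD, Φ.apply_symm_apply]; exact e
  have Umem : ∀ {k x}, x ∈ FA Φ k → U * x ∈ FA Φ (k + 1) := by
    intro k x hx
    rw [mem, hΦU]; exact Uop_mem a b g hb hx
  have Dmem : ∀ {k x}, x ∈ FA Φ k → D * x ∈ FA Φ (k + 1) := by
    intro k x hx
    rw [mem, hΦD]; exact Dop_mem a b g hb hx
  have mulN : ∀ (i : ℕ) {j x y}, x ∈ FA Φ i → y ∈ FA Φ j → x * y ∈ FA Φ (i + j) := by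
    intro i
    induction i with
    | zero =>
      intro j x y hx hy
      obtain ⟨c, rfl⟩ := zero x hx
      rw [← Algebra.smul_def, Nat.cast_zero, zero_add]
      exact Submodule.smul_mem _ c hy
    | succ i ih =>
      intro j x y hx hy
      obtain ⟨u, hu, v, hv, w, hw, rfl⟩ := gen _ (by push_cast; omega) x hx
      have e : ((i + 1 : ℕ) : ℤ) - 1 = i := by push_cast; ring
      rw [e] at hu hv hw
      have e' : ((i + 1 : ℕ) : ℤ) + j = i + j + 1 := by push_cast; ring
      rw [add_mul, add_mul, mul_assoc, mul_assoc, e']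
      exact add_mem (add_mem (Umem (ih hu hy)) (Dmem (ih hv hy))) (mono (by omega) (ih hw hy))
  have mul : ∀ {i j x y}, x ∈ FA Φ i → y ∈ FA Φ j → x * y ∈ FA Φ (i + j) := by
    intro i j x y hx hy
    rcases lt_or_ge i 0 with h | h
    · rw [neg i h, Submodule.mem_bot] at hx
      rw [hx, zero_mul]; exact zero_mem _
    · lift i to ℕ using h
      exact mulN i hx hy
  have hU : U ∈ FA Φ 1 := by simpa using Umem one
  have hD : D ∈ FA Φ 1 := by simpa using Dmem one
  have one2 : (1 : A) ∈ FA Φ 2 := mono (show (0 : ℤ) ≤ 2 by norm_num) one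
  have m2 : ∀ {x y}, x ∈ FA Φ 1 → y ∈ FA Φ 1 → x * y ∈ FA Φ 2 := by
    intro x y hx hy
    have h := mul hx hy
    rwa [show (1 : ℤ) + 1 = 2 by norm_num] at h
  have hS1 : ∀ c, Φ (-(a • (D * U) + b • (U * D) + g • (1 : A)) * c) = S1 a b g hb (Φ c) := by
    intro c
    simp only [S1, neg_mul, add_mul, smul_mul_assoc, one_mul, map_neg, map_add, map_smul,
      mul_assoc, hΦU, hΦD]
  have hS2 : ∀ c, Φ (-(b • (D * D)) * c) = S2 a b g hb (Φ c) := by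
    intro c
    simp only [S2, neg_mul, smul_mul_assoc, map_neg, map_smul, mul_assoc, hΦD]
  have hS3 : ∀ c, Φ (U * U * c) = S3 a b g hb (Φ c) := by
    intro c
    simp only [S3, mul_assoc, hΦU]
  have hS4 : ∀ c, Φ ((D * U - a • (U * D) - g • (1 : A)) * c) = S4 a b g hb (Φ c) := by
    intro c
    simp only [S4, sub_mul, smul_mul_assoc, one_mul, map_sub, map_smul, mul_assoc, hΦU, hΦD]
  have hw : ∀ c, Φ (-(b • D) * c) = -(b • Dop a b g hb (Φ c)) := by
    intro c
    simp only [neg_mul, smul_mul_assoc, map_neg, map_smul, hΦD]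
  have kf : DU.KF A (fun k => (FA Φ k).toAddSubgroup) U D
      (-(a • (D * U) + b • (U * D) + g • (1 : A))) (-(b • (D * D))) (U * U)
      (D * U - a • (U * D) - g • (1 : A)) (-(b • D)) U := 
    { mono := fun i j h x hx => mono h hx
      neg := by
        intro k hk
        ext x
        have : x ∈ FA Φ k ↔ x = 0 := by rw [neg k hk, Submodule.mem_bot]
        exact this
      zero := by
        intro x hx hx0
        obtain ⟨c, rfl⟩ := zero x hx
        have hc : c ≠ 0 := by rintro rfl; exact hx0 (map_zero _)
        refine ⟨algebraMap K A c⁻¹, ?_, ?_⟩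
        · rw [Algebra.algebraMap_eq_smul_one]
          exact (FA Φ 0).smul_mem _ one
        · rw [← map_mul, inv_mul_cancel₀ hc, map_one]
      one := one
      mul := mul
      ex := fun x => FV_ex (Φ x)
      hU := hU
      hD := hD
      hw1 := (FA Φ 1).neg_mem ((FA Φ 1).smul_mem _ hD)
      hw2 := hU
      hs1 := (FA Φ 2).neg_mem (add_mem (add_mem ((FA Φ 2).smul_mem _ (m2 hD hU))
        ((FA Φ 2).smul_mem _ (m2 hU hD))) ((FA Φ 2).smul_mem _ one2))
      hs2 := (FA Φ 2).neg_mem ((FA Φ 2).smul_mem _ (m2 hD hD))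
      hs3 := m2 hU hU
      hs4 := (FA Φ 2).sub_mem ((FA Φ 2).sub_mem (m2 hD hU)
        ((FA Φ 2).smul_mem _ (m2 hU hD))) ((FA Φ 2).smul_mem _ one2)
      r1 := by
        have : (-(a • (D * U) + b • (U * D) + g • (1 : A))) * (-(b • D)) + (-(b • (D * D))) * U =
          b • ((a • (D * U * D) + b • (U * D * D) + g • D) - D * D * U) := by
          simp only [neg_mul, mul_neg, add_mul, smul_mul_assoc, mul_smul_comm, one_mul]
          module
        rw [this, ← r2, sub_self, smul_zero]
      r2 := by
        have : U * U * (-(b • D)) + (D * U - a • (U * D) - g • (1 : A)) * U =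
          D * U * U - (a • (U * D * U) + b • (U * U * D) + g • U) := by
          simp only [mul_neg, sub_mul, smul_mul_assoc, mul_smul_comm, one_mul]
          abel
        rw [this, ← r1, sub_self]
      r3 := by
        have : U * (-(a • (D * U) + b • (U * D) + g • (1 : A))) + D * (U * U) =
          D * U * U - (a • (U * D * U) + b • (U * U * D) + g • U) := by
          simp only [mul_neg, mul_add, smul_mul_assoc, mul_smul_comm, mul_one, mul_assoc]
          abel
        rw [this, ← r1, sub_self]
      r4 := by
        have : U * (-(b • (D * D))) + D * (D * U - a • (U * D) - g • (1 : A)) =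
          D * D * U - (a • (D * U * D) + b • (U * D * D) + g • D) := by
          simp only [mul_neg, mul_sub, smul_mul_assoc, mul_smul_comm, mul_one, mul_assoc]
          abel
        rw [this, ← r2, sub_self]
      gen := gen
      E1 := by
        intro k x hx y hy h
        have h : Φ (U * x + D * y) ∈ FV K k := h
        rw [map_add, hΦU, hΦD] at h
        obtain ⟨c, hc, e, he, h1, h2⟩ := E1V a b g hb k (Φ x) hx (Φ y) hy h
        refine ⟨Φ.symm c, ?_, Φ.symm e, ?_, ?_, ?_⟩
        · change Φ _ ∈ FV K _; rw [Φ.apply_symm_apply]; exact hc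
        · change Φ _ ∈ FV K _; rw [Φ.apply_symm_apply]; exact he
        · change Φ _ ∈ FV K _
          rw [map_sub, map_add, hS1, hS2, Φ.apply_symm_apply, Φ.apply_symm_apply]; exact h1
        · change Φ _ ∈ FV K _
          rw [map_sub, map_add, hS3, hS4, Φ.apply_symm_apply, Φ.apply_symm_apply]; exact h2
      E2 := by
        intro k c hc e he h1 h2
        have h1 : Φ _ ∈ FV K (k + 1) := h1
        have h2 : Φ _ ∈ FV K (k + 1) := h2
        rw [map_add, hS1, hS2] at h1
        rw [map_add, hS3, hS4] at h2
        obtain ⟨f, hf, h3, h4⟩ := E2V a b g hb k (Φ c) hc (Φ e) he h1 h2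
        refine ⟨Φ.symm f, ?_, ?_, ?_⟩
        · change Φ _ ∈ FV K _; rw [Φ.apply_symm_apply]; exact hf
        · change Φ _ ∈ FV K _
          rw [map_sub, hw, Φ.apply_symm_apply]; exact h3
        · change Φ _ ∈ FV K _
          rw [map_sub, hΦU, Φ.apply_symm_apply]; exact h4
      E3 := by
        intro k f _ h1 h2
        have h1 : Φ _ ∈ FV K k := h1
        have h2 : Φ _ ∈ FV K k := h2
        rw [hw] at h1
        rw [hΦU] at h2
        exact E3V a b g hb k (Φ f) h1 h2 }
  have := DU.rees_noeth a b g hb r1 r2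
  have hsn := DU.sn_of_rees (F := FA Φ) (U := U) (D := D) mono neg one mul hU hD zero gen
  exact DU.stably_free kf hsn P

end Final
end DUM

section Assembly
open MulOpposite
variable (K : Type) [Field K] (a b g : K)

/-- the down generator -/
def dGen : DownUp K a b g := RingQuot.mkAlgHom K (DownUpRel K a b g) (FreeAlgebra.ι K 0)
/-- the up generator -/
def uGen : DownUp K a b g := RingQuot.mkAlgHom K (DownUpRel K a b g) (FreeAlgebra.ι K 1)

lemma gen_rel1 : dGen K a b g * uGen K a b g * uGen K a b g =
    a • (uGen K a b g * dGen K a b g * uGen K a b g) +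
    b • (uGen K a b g * uGen K a b g * dGen K a b g) + g • uGen K a b g := by
  have := RingQuot.mkAlgHom_rel K (DownUpRel.rel1 (K := K) (a := a) (b := b) (g := g))
  simp only [map_mul, map_add, map_smul] at this
  exact this

lemma gen_rel2 : dGen K a b g * dGen K a b g * uGen K a b g =
    a • (dGen K a b g * uGen K a b g * dGen K a b g) +
    b • (uGen K a b g * dGen K a b g * dGen K a b g) + g • dGen K a b g := by
  have := RingQuot.mkAlgHom_rel K (DownUpRel.rel2 (K := K) (a := a) (b := b) (g := g))
  simp only [map_mul, map_add, map_smul] at this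
  exact this

lemma gen_top : Algebra.adjoin K {dGen K a b g, uGen K a b g} = ⊤ := by
  have h : Set.range (FreeAlgebra.ι K : Fin 2 → _) =
      {FreeAlgebra.ι K (0 : Fin 2), FreeAlgebra.ι K (1 : Fin 2)} := by
    ext x
    simp [Fin.exists_fin_two, eq_comm]
  have := congrArg (Subalgebra.map (RingQuot.mkAlgHom K (DownUpRel K a b g)))
    (FreeAlgebra.adjoin_range_ι K (Fin 2))
  rw [h, AlgHom.map_adjoin, Set.image_pair, Algebra.map_top,
    (AlgHom.range_eq_top _).mpr (RingQuot.mkAlgHom_surjective K _)] at this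
  exact this

lemma exists_T (hb : b ≠ 0) : ∃ T : (DownUp K a b g)ᵐᵒᵖ →ₐ[K] Module.End K (DUM.VM K),
    T (op (dGen K a b g)) = DUM.Uop a b g hb ∧ T (op (uGen K a b g)) = DUM.Dop a b g hb := by
  let f : FreeAlgebra K (Fin 2) →ₐ[K] (Module.End K (DUM.VM K))ᵐᵒᵖ :=
    FreeAlgebra.lift K ![op (DUM.Uop a b g hb), op (DUM.Dop a b g hb)]
  have f0 : f (FreeAlgebra.ι K 0) = op (DUM.Uop a b g hb) := by simp [f]
  have f1 : f (FreeAlgebra.ι K 1) = op (DUM.Dop a b g hb) := by simp [f]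
  have hf : ∀ ⦃x y⦄, DownUpRel K a b g x y → f x = f y := by
    intro x y h
    cases h
    · simp only [map_mul, map_add, map_smul, f0, f1]
      apply unop_injective
      simp only [unop_mul, unop_op, unop_add, unop_smul]
      rw [← mul_assoc, DUM.rel2]
      simp only [mul_assoc]
    · simp only [map_mul, map_add, map_smul, f0, f1]
      apply unop_injective
      simp only [unop_mul, unop_op, unop_add, unop_smul]
      rw [← mul_assoc, DUM.rel1]
      simp only [mul_assoc]
  let F : DownUp K a b g →ₐ[K] (Module.End K (DUM.VM K))ᵐᵒᵖ := RingQuot.liftAlgHom K ⟨f, hf⟩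
  refine ⟨AlgHom.opComm F, ?_, ?_⟩
  · change unop (F (dGen K a b g)) = _
    have : F (dGen K a b g) = f (FreeAlgebra.ι K 0) := RingQuot.liftAlgHom_mkAlgHom_apply K f hf _
    rw [this, f0, unop_op]
  · change unop (F (uGen K a b g)) = _
    have : F (uGen K a b g) = f (FreeAlgebra.ι K 1) := RingQuot.liftAlgHom_mkAlgHom_apply K f hf _
    rw [this, f1, unop_op]

lemma op_gen_top : Algebra.adjoin K {op (dGen K a b g), op (uGen K a b g)} = ⊤ := by
  have := congrArg Subalgebra.op (gen_top K a b g)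
  rw [Subalgebra.op_adjoin, Subalgebra.op_top] at this
  rw [← this]
  congr 1
  ext x
  constructor
  · rintro (rfl | rfl)
    · exact Or.inl rfl
    · exact Or.inr rfl
  · rintro (h | h)
    · exact Or.inl (unop_injective h)
    · exact Or.inr (unop_injective h)

/-- the regular right module, two ways -/
def regEquiv (A : Type) [Ring A] : A ≃ₗ[Aᵐᵒᵖ] Aᵐᵒᵖ where
  toFun := op
  invFun := unop
  left_inv _ := rfl
  right_inv _ := rfl
  map_add' _ _ := rfl
  map_smul' _ _ := rfl

end Assembly

/-- If `β ≠ 0`, the down-up algebra `A = A(α,β,γ)` is a PSF ring: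
every finitely generated projective right `A`-module is stably free. -/
theorem downUp_is_PSF (K : Type) [Field K] (α β γ : K) (hβ : β ≠ 0)
    (P : Type) [AddCommGroup P] [Module (DownUp K α β γ)ᵐᵒᵖ P]
    (hfg : Module.Finite (DownUp K α β γ)ᵐᵒᵖ P)
    (hproj : Module.Projective (DownUp K α β γ)ᵐᵒᵖ P) :
    IsStablyFreeRight (DownUp K α β γ) P := by
  obtain ⟨T, hT0, hT1⟩ := exists_T K α β γ hβ
  have r1 : MulOpposite.op (uGen K α β γ) * MulOpposite.op (dGen K α β γ) *
      MulOpposite.op (dGen K α β γ) =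
      α • (MulOpposite.op (dGen K α β γ) * MulOpposite.op (uGen K α β γ) *
        MulOpposite.op (dGen K α β γ)) +
      β • (MulOpposite.op (dGen K α β γ) * MulOpposite.op (dGen K α β γ) *
        MulOpposite.op (uGen K α β γ)) + γ • MulOpposite.op (dGen K α β γ) := by
    apply MulOpposite.unop_injective
    simp only [MulOpposite.unop_mul, MulOpposite.unop_op, MulOpposite.unop_add,
      MulOpposite.unop_smul]
    rw [← mul_assoc, gen_rel2]
    simp only [mul_assoc]
  have r2 : MulOpposite.op (uGen K α β γ) * MulOpposite.op (uGen K α β γ) *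
      MulOpposite.op (dGen K α β γ) =
      α • (MulOpposite.op (uGen K α β γ) * MulOpposite.op (dGen K α β γ) *
        MulOpposite.op (uGen K α β γ)) +
      β • (MulOpposite.op (dGen K α β γ) * MulOpposite.op (uGen K α β γ) *
        MulOpposite.op (uGen K α β γ)) + γ • MulOpposite.op (uGen K α β γ) := by
    apply MulOpposite.unop_injective
    simp only [MulOpposite.unop_mul, MulOpposite.unop_op, MulOpposite.unop_add,
      MulOpposite.unop_smul]
    rw [← mul_assoc, gen_rel1]
    simp only [mul_assoc]
  obtain ⟨Φ, h1, h2, h3⟩ := DUM.exists_equiv r1 r2 (op_gen_top K α β γ) T hT0 hT1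
  obtain ⟨n, m, ⟨e⟩⟩ := DUM.main_left r1 r2 Φ h1 h2 h3 P
  let R := regEquiv (DownUp K α β γ)
  exact ⟨n, m, ⟨((LinearEquiv.refl _ P).prodCongr (LinearEquiv.piCongrRight fun _ => R)).trans
    (e.trans (LinearEquiv.piCongrRight fun _ => R).symm)⟩⟩
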